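/- arXiv:2502.07816 — 3 statements merged into one kernel-verified Lean document; each statement's English description precedes it below -/
import Mathlib

section
/- Let N ≥ 2, 1 < p < N, 0 ≤ s < p, s < σ < N, 0 < σ + s ≤ 2p, and set p_{s,σ} := (2N−σ−s)p/(2(N−p)). There exists a constant C̄ = C̄(N,p,s,σ) > 0 such that for every u ∈ L^{p⋆}(ℝ^N) with p⋆ = Np/(N−p), the function V₃(x) := (∫_{ℝ^N} |u(y)|^{p_{s,σ}}/|x−y|^{σ} dy) · |u(x)|^{p_{s,σ}−p} belongs to L^{N/(p−s)}(ℝ^N) and satisfies ‖V₃‖_{L^{N/(p−s)}(ℝ^N)} ≤ C̄ · ‖u‖_{L^{p⋆}(ℝ^N)}^{2p_{s,σ}−p}. -/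
open MeasureTheory

/-- The critical exponent `p_{s,σ} = (2N - σ - s)p / (2(N - p))` of the weighted
nonlocal nonlinearity. -/
noncomputable def pcrit (N : ℕ) (p s σ : ℝ) : ℝ :=
  (2 * (N : ℝ) - σ - s) * p / (2 * ((N : ℝ) - p))

open Set Function
open scoped ENNReal NNReal

/-!
Hölder's inequality splits `V₃` into `|u| ^ (p_{s,σ} - p) ∈ L^{p⋆ / (p_{s,σ} - p)}` and the Riesz
potential of `|u| ^ p_{s,σ} ∈ L^{p⋆ / p_{s,σ}}`, which the Hardy–Littlewood–Sobolev inequality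
places in `L^{2N / (σ - s)}`. Of the kernel `|x - y| ^ (-σ)` this uses only that its sections are
uniformly in weak `L^{N / σ}`, which needs nothing about the space beyond
`μ (ball x R) ≤ A * R ^ N`.

For a kernel `k` in weak `L^w`, `f` normalized in `L^r` and `1 / t + 1 = 1 / r + 1 / w`, cut `k` at
height `l ^ (r / w)` and `f` at height `l`. Up to a term of size `l ^ (r / t)`, the potential of `f`
is then `∫ (k - l ^ (r / w))₊ (f - l)₊`, whose `L¹` norm is controlled by `∫_{f > l} f`; Chebyshev's
inequality and integration over `l`, as in Doob's maximal inequality, give the strong bound.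
-/

section LayerCake

variable {α : Type*} [MeasurableSpace α] {μ : Measure α} {f : α → ℝ≥0∞} {p : ℝ}

lemma setLIntegral_Ioi_zero_ofReal_rpow_eq_top (a : ℝ) :
    ∫⁻ l in Ioi (0 : ℝ), ENNReal.ofReal (l ^ a) = ∞ := by
  by_contra hfin
  refine not_integrableOn_Ioi_rpow a ⟨by fun_prop, ?_⟩
  rw [hasFiniteIntegral_iff_ofReal]
  · exact lt_top_iff_ne_top.2 hfin
  · filter_upwards [ae_restrict_mem measurableSet_Ioi] with l hl
      using Real.rpow_nonneg (le_of_lt hl) a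

lemma setLIntegral_Ioo_ofReal_rpow {a M : ℝ} (ha : -1 < a) (hM : 0 ≤ M) :
    ∫⁻ l in Ioo 0 M, ENNReal.ofReal (l ^ a) = ENNReal.ofReal (M ^ (a + 1) / (a + 1)) := by
  have hint : IntegrableOn (fun l : ℝ ↦ l ^ a) (Ioc 0 M) :=
    (intervalIntegral.intervalIntegrable_rpow' ha).1
  rw [restrict_Ioo_eq_restrict_Ioc, ← ofReal_integral_eq_lintegral_ofReal hint,
    ← intervalIntegral.integral_of_le hM, integral_rpow (Or.inl ha),
    Real.zero_rpow (by linarith), sub_zero]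
  filter_upwards [ae_restrict_mem measurableSet_Ioc] with l hl using Real.rpow_nonneg hl.1.le a

lemma setLIntegral_Ioi_ofReal_rpow {a M : ℝ} (ha : a < -1) (hM : 0 < M) :
    ∫⁻ l in Ioi M, ENNReal.ofReal (l ^ a) = ENNReal.ofReal (-M ^ (a + 1) / (a + 1)) := by
  rw [← ofReal_integral_eq_lintegral_ofReal (integrableOn_Ioi_rpow_of_lt ha hM),
    integral_Ioi_rpow_of_lt ha hM]
  filter_upwards [ae_restrict_mem measurableSet_Ioi] with l hl
    using Real.rpow_nonneg (hM.trans hl).le a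

lemma lintegral_ennreal_rpow_eq_lintegral_meas_lt_mul_of_ae_ne_top (hf : AEMeasurable f μ)
    (hfin : ∀ᵐ x ∂μ, f x ≠ ∞) (hp : 0 < p) :
    ∫⁻ x, f x ^ p ∂μ = ENNReal.ofReal p *
      ∫⁻ l in Ioi (0 : ℝ), μ {x | ENNReal.ofReal l < f x} * ENNReal.ofReal (l ^ (p - 1)) := by
  have hlevel (l : ℝ) (hl : l ∈ Ioi 0) :
      μ {x | l < (f x).toReal} = μ {x | ENNReal.ofReal l < f x} := by
    refine measure_congr ?_
    filter_upwards [hfin] with x hx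
    exact propext (ENNReal.ofReal_lt_iff_lt_toReal (le_of_lt hl) hx).symm
  have htoReal : ∫⁻ x, f x ^ p ∂μ = ∫⁻ x, ENNReal.ofReal ((f x).toReal ^ p) ∂μ := by
    refine lintegral_congr_ae ?_
    filter_upwards [hfin] with x hx
    rw [← ENNReal.ofReal_rpow_of_nonneg ENNReal.toReal_nonneg hp.le, ENNReal.ofReal_toReal hx]
  rw [htoReal, lintegral_rpow_eq_lintegral_meas_lt_mul μ
    (Filter.Eventually.of_forall fun _ ↦ ENNReal.toReal_nonneg) hf.ennreal_toReal hp]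
  congr 1
  exact setLIntegral_congr_fun measurableSet_Ioi fun l hl ↦ by rw [hlevel l hl]

lemma lintegral_ennreal_rpow_eq_lintegral_meas_lt_mul (hf : AEMeasurable f μ) (hp : 0 < p) :
    ∫⁻ x, f x ^ p ∂μ = ENNReal.ofReal p *
      ∫⁻ l in Ioi (0 : ℝ), μ {x | ENNReal.ofReal l < f x} * ENNReal.ofReal (l ^ (p - 1)) := by
  by_cases htop : μ {x | f x = ∞} = 0
  · exact lintegral_ennreal_rpow_eq_lintegral_meas_lt_mul_of_ae_ne_top hf
      (by simpa [ae_iff] using htop) hp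
  have hleft : ∫⁻ x, f x ^ p ∂μ = ∞ := by
    by_contra hfin
    refine htop (measure_mono_null (fun x hx ↦ ?_) (ae_lt_top' (hf.pow_const p) hfin))
    simp_all [ENNReal.top_rpow_of_pos hp]
  have hright : ∫⁻ l in Ioi (0 : ℝ),
      μ {x | ENNReal.ofReal l < f x} * ENNReal.ofReal (l ^ (p - 1)) = ∞ := by
    refine top_le_iff.1 ?_
    calc ∞ = μ {x | f x = ∞} * ∫⁻ l in Ioi (0 : ℝ), ENNReal.ofReal (l ^ (p - 1)) := by
          rw [setLIntegral_Ioi_zero_ofReal_rpow_eq_top, ENNReal.mul_top htop]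
      _ = ∫⁻ l in Ioi (0 : ℝ), μ {x | f x = ∞} * ENNReal.ofReal (l ^ (p - 1)) :=
          (lintegral_const_mul _ (by fun_prop)).symm
      _ ≤ _ := by
          gcongr with l x
          intro hx
          simp [hx]
  rw [hleft, hright, ENNReal.mul_top (by simpa using hp)]

lemma lintegral_eq_lintegral_meas_ofReal_lt (hf : AEMeasurable f μ) :
    ∫⁻ x, f x ∂μ = ∫⁻ l in Ioi (0 : ℝ), μ {x | ENNReal.ofReal l < f x} := by
  simpa using lintegral_ennreal_rpow_eq_lintegral_meas_lt_mul hf one_pos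

-- The layer-cake formula for `f ^ (p - 1)` against the measure with density `f`.
lemma lintegral_ennreal_rpow_eq_lintegral_setLIntegral_lt_mul (hf : AEMeasurable f μ)
    (hp : 1 < p) :
    ∫⁻ x, f x ^ p ∂μ = ENNReal.ofReal (p - 1) * ∫⁻ l in Ioi (0 : ℝ),
      (∫⁻ x in {x | ENNReal.ofReal l < f x}, f x ∂μ) * ENNReal.ofReal (l ^ (p - 2)) := by
  have hp1 : 0 < p - 1 := sub_pos.2 hp
  have hdensity (l : ℝ) : ∫⁻ x in {x | ENNReal.ofReal l < f x}, f x ∂μ =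
      μ.withDensity f {x | ENNReal.ofReal l < f x} :=
    (withDensity_apply₀ f (nullMeasurableSet_lt aemeasurable_const hf)).symm
  have hrpow : ∫⁻ x, f x ^ (p - 1) ∂μ.withDensity f = ∫⁻ x, f x ^ p ∂μ := by
    rw [lintegral_withDensity_eq_lintegral_mul₀ hf (hf.pow_const _)]
    refine lintegral_congr fun x ↦ ?_
    nth_rw 1 [Pi.mul_apply, ← ENNReal.rpow_one (f x)]
    rw [← ENNReal.rpow_add_of_nonneg _ _ zero_le_one hp1.le, add_sub_cancel]
  rw [← hrpow, lintegral_ennreal_rpow_eq_lintegral_meas_lt_mul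
    (hf.mono_ac (withDensity_absolutelyContinuous μ f)) hp1]
  simp_rw [hdensity, sub_sub, one_add_one_eq_two]

-- Doob's `L^p` argument: integrate the tail bound against `p * l ^ (p - 1)`.
lemma lintegral_rpow_le_of_forall_meas_lt_le {β : Type*} [MeasurableSpace β]
    {ν : Measure β} {g : β → ℝ≥0∞} {C : ℝ≥0∞} (hf : AEMeasurable f μ) (hg : AEMeasurable g ν)
    (hC : C ≠ ∞) (hp : 1 < p)
    (h : ∀ l : ℝ, 0 < l → μ {x | ENNReal.ofReal l < f x} ≤
      C * ENNReal.ofReal l⁻¹ * ∫⁻ y in {y | ENNReal.ofReal l < g y}, g y ∂ν) :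
    ∫⁻ x, f x ^ p ∂μ ≤ C * ENNReal.ofReal (p / (p - 1)) * ∫⁻ y, g y ^ p ∂ν := by
  have hp1 : 0 < p - 1 := sub_pos.2 hp
  set G : ℝ → ℝ≥0∞ := fun l ↦ ∫⁻ y in {y | ENNReal.ofReal l < g y}, g y ∂ν
  have hlevel (l : ℝ) (hl : 0 < l) :
      μ {x | ENNReal.ofReal l < f x} * ENNReal.ofReal (l ^ (p - 1)) ≤
        C * (G l * ENNReal.ofReal (l ^ (p - 2))) := by
    have hpow : l ^ (p - 2) = l⁻¹ * l ^ (p - 1) := by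
      rw [inv_mul_eq_div, ← Real.rpow_sub_one hl.ne', sub_sub, one_add_one_eq_two]
    rw [hpow, ENNReal.ofReal_mul (inv_nonneg.2 hl.le)]
    exact (mul_le_mul_left (h l hl) _).trans_eq (by ring)
  calc ∫⁻ x, f x ^ p ∂μ
      = ENNReal.ofReal p * ∫⁻ l in Ioi (0 : ℝ),
          μ {x | ENNReal.ofReal l < f x} * ENNReal.ofReal (l ^ (p - 1)) :=
        lintegral_ennreal_rpow_eq_lintegral_meas_lt_mul hf (zero_lt_one.trans hp)
    _ ≤ ENNReal.ofReal p *
          ∫⁻ l in Ioi (0 : ℝ), C * (G l * ENNReal.ofReal (l ^ (p - 2))) := by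
        gcongr ENNReal.ofReal p * ?_
        exact setLIntegral_mono' measurableSet_Ioi hlevel
    _ = C * ENNReal.ofReal (p / (p - 1) * (p - 1)) *
          ∫⁻ l in Ioi (0 : ℝ), G l * ENNReal.ofReal (l ^ (p - 2)) := by
        rw [lintegral_const_mul' _ _ hC, div_mul_cancel₀ _ hp1.ne']
        ring
    _ = C * ENNReal.ofReal (p / (p - 1)) * ∫⁻ y, g y ^ p ∂ν := by
        rw [lintegral_ennreal_rpow_eq_lintegral_setLIntegral_lt_mul hg hp,
          ENNReal.ofReal_mul (by positivity)]
        ring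

end LayerCake

section WeakLebesgue

variable {α : Type*} [MeasurableSpace α]

lemma lintegral_mul_le_lintegral_min_mul_add {μ : Measure α} {f g : α → ℝ≥0∞}
    (hg : AEMeasurable g μ) (hf : AEMeasurable f μ) (a b : ℝ≥0∞) :
    ∫⁻ x, g x * f x ∂μ ≤ ∫⁻ x, min (g x) a * f x ∂μ + (∫⁻ x, (g x - a) ∂μ) * b +
      ∫⁻ x, (g x - a) * (f x - b) ∂μ := by
  calc ∫⁻ x, g x * f x ∂μ
      ≤ ∫⁻ x, (min (g x) a * f x + (g x - a) * b + (g x - a) * (f x - b)) ∂μ := by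
        refine lintegral_mono fun x ↦ ?_
        calc g x * f x = min (g x) a * f x + (g x - a) * f x := by
              rw [← add_mul, add_comm (min _ _), tsub_add_min]
          _ ≤ min (g x) a * f x + (g x - a) * (b + (f x - b)) := by
              gcongr
              exact le_add_tsub
          _ = _ := by ring
    _ = _ := by
        rw [lintegral_add_left' (by fun_prop), lintegral_add_left' (by fun_prop),
          lintegral_mul_const'' b (f := fun x ↦ g x - a) (by fun_prop)]

lemma lintegral_tsub_le_setLIntegral_lt {μ : Measure α} {f : α → ℝ≥0∞} (hf : AEMeasurable f μ)
    (b : ℝ≥0∞) : ∫⁻ x, (f x - b) ∂μ ≤ ∫⁻ x in {x | b < f x}, f x ∂μ := by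
  rw [← lintegral_indicator₀ (nullMeasurableSet_lt aemeasurable_const hf)]
  refine lintegral_mono fun x ↦ ?_
  by_cases hx : b < f x
  · simp [hx]
  · simp [tsub_eq_zero_of_le (not_lt.1 hx)]

/-- `g` lies in the weak Lebesgue space `L^{w,∞}(μ)`, with `w`-th power of its quasi-norm
`sup_l l * μ {l < g} ^ (1 / w)` at most `A`. -/
def HasWeakLpBound (g : α → ℝ≥0∞) (w : ℝ) (A : ℝ≥0) (μ : Measure α) : Prop :=
  ∀ l : ℝ, 0 < l → μ {x | ENNReal.ofReal l < g x} ≤ A * ENNReal.ofReal (l ^ (-w))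

lemma div_eq_one_add_div_mul_one_sub {q r t w : ℝ} (hqr : q.HolderConjugate r) (hw : w ≠ 0)
    (ht : 1 / t = 1 / w - 1 / q) : r / t = 1 + r / w * (1 - w) := by
  have hr0 : r ≠ 0 := hqr.symm.ne_zero
  rw [div_eq_mul_one_div r t, ht, one_div q, ← hqr.symm.one_sub_inv]
  field_simp
  ring

/-- The constant in `HasWeakLpBound.lintegral_mul_le`, for a kernel with weak `L^w` bound `A`
paired with a function in `L^r`, `r` conjugate to `q`. The summands come from
`HasWeakLpBound.lintegral_min_mul_le` and `HasWeakLpBound.lintegral_tsub_le`. -/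
noncomputable def weakLpTruncationConst (w q : ℝ) (A : ℝ≥0) : ℝ≥0∞ :=
  (A * ENNReal.ofReal (q / (q - w))) ^ (1 / q) + A * ENNReal.ofReal (w - 1)⁻¹

lemma weakLpTruncationConst_ne_top {w q : ℝ} {A : ℝ≥0} (hq : 0 ≤ q) :
    weakLpTruncationConst w q A ≠ ∞ := by
  have hq' : 0 ≤ 1 / q := one_div_nonneg.2 hq
  unfold weakLpTruncationConst
  finiteness

namespace HasWeakLpBound

variable {μ : Measure α} {f g : α → ℝ≥0∞} {w : ℝ} {A : ℝ≥0}

lemma lintegral_min_rpow_le (h : HasWeakLpBound g w A μ) (hg : AEMeasurable g μ) {q M : ℝ}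
    (hq : 0 < q) (hwq : w < q) (hM : 0 ≤ M) :
    ∫⁻ x, min (g x) (ENNReal.ofReal M) ^ q ∂μ ≤ A * ENNReal.ofReal (q / (q - w) * M ^ (q - w)) := by
  have hlevel (l : ℝ) (hl : 0 < l) :
      μ {x | ENNReal.ofReal l < min (g x) (ENNReal.ofReal M)} * ENNReal.ofReal (l ^ (q - 1)) ≤
        (Iio M).indicator (fun l ↦ A * ENNReal.ofReal (l ^ (q - w - 1))) l := by
    rcases lt_or_ge l M with hlM | hlM
    · rw [indicator_of_mem (mem_Iio.2 hlM), show q - w - 1 = -w + (q - 1) by ring, Real.rpow_add hl,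
        ENNReal.ofReal_mul (by positivity), ← mul_assoc]
      gcongr
      refine (measure_mono fun x hx ↦ ?_).trans (h l hl)
      exact lt_of_lt_of_le (b := min (g x) (ENNReal.ofReal M)) hx (min_le_left _ _)
    · simp [(ENNReal.ofReal_le_ofReal hlM).not_gt]
  calc ∫⁻ x, min (g x) (ENNReal.ofReal M) ^ q ∂μ
      = ENNReal.ofReal q * ∫⁻ l in Ioi (0 : ℝ),
          μ {x | ENNReal.ofReal l < min (g x) (ENNReal.ofReal M)} *
            ENNReal.ofReal (l ^ (q - 1)) :=
        lintegral_ennreal_rpow_eq_lintegral_meas_lt_mul (hg.min aemeasurable_const) hq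
    _ ≤ ENNReal.ofReal q * ∫⁻ l in Ioi (0 : ℝ),
          (Iio M).indicator (fun l ↦ A * ENNReal.ofReal (l ^ (q - w - 1))) l := by
        gcongr ENNReal.ofReal q * ?_
        exact setLIntegral_mono' measurableSet_Ioi hlevel
    _ = ENNReal.ofReal q * (A * ENNReal.ofReal (M ^ (q - w) / (q - w))) := by
        rw [setLIntegral_indicator measurableSet_Iio, inter_comm, Ioi_inter_Iio,
          lintegral_const_mul _ (by fun_prop), setLIntegral_Ioo_ofReal_rpow (by linarith) hM,
          sub_add_cancel]
    _ = A * ENNReal.ofReal (q / (q - w) * M ^ (q - w)) := by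
        rw [mul_left_comm, ← ENNReal.ofReal_mul hq.le]
        congr 2
        ring

lemma lintegral_tsub_le (h : HasWeakLpBound g w A μ) (hg : AEMeasurable g μ) (hw : 1 < w) {M : ℝ}
    (hM : 0 < M) :
    ∫⁻ x, (g x - ENNReal.ofReal M) ∂μ ≤ A * ENNReal.ofReal ((w - 1)⁻¹ * M ^ (1 - w)) := by
  have hlevel (l : ℝ) (hl : 0 < l) : μ {x | ENNReal.ofReal l < g x - ENNReal.ofReal M} ≤
      A * ENNReal.ofReal ((l + M) ^ (-w)) := by
    simp only [lt_tsub_iff_right, ← ENNReal.ofReal_add hl.le hM.le]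
    exact h (l + M) (by positivity)
  calc ∫⁻ x, (g x - ENNReal.ofReal M) ∂μ
      = ∫⁻ l in Ioi (0 : ℝ), μ {x | ENNReal.ofReal l < g x - ENNReal.ofReal M} :=
        lintegral_eq_lintegral_meas_ofReal_lt (hg.sub aemeasurable_const)
    _ ≤ ∫⁻ l in Ioi (0 : ℝ), A * ENNReal.ofReal ((l + M) ^ (-w)) :=
        setLIntegral_mono' measurableSet_Ioi hlevel
    _ = ∫⁻ l in Ioi M, A * ENNReal.ofReal (l ^ (-w)) := by
        rw [← (measurePreserving_add_right volume M).setLIntegral_comp_preimage_emb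
          (measurableEmbedding_addRight M) _ (Ioi M), preimage_add_const_Ioi, sub_self]
    _ = A * ENNReal.ofReal ((w - 1)⁻¹ * M ^ (1 - w)) := by
        rw [lintegral_const_mul _ (by fun_prop), setLIntegral_Ioi_ofReal_rpow (by linarith) hM,
          neg_add_eq_sub, ← neg_sub w 1, neg_div_neg_eq, div_eq_inv_mul]

lemma lintegral_min_mul_le (h : HasWeakLpBound g w A μ) (hg : AEMeasurable g μ)
    (hf : AEMeasurable f μ) {q r M : ℝ} (hqr : q.HolderConjugate r) (hwq : w < q) (hM : 0 ≤ M) :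
    ∫⁻ x, min (g x) (ENNReal.ofReal M) * f x ∂μ ≤
      (A * ENNReal.ofReal (q / (q - w) * M ^ (q - w))) ^ (1 / q) *
        (∫⁻ x, f x ^ r ∂μ) ^ (1 / r) := by
  have hq : 0 < q := hqr.pos
  refine (ENNReal.lintegral_mul_le_Lp_mul_Lq μ hqr (hg.min aemeasurable_const) hf).trans ?_
  gcongr
  exact h.lintegral_min_rpow_le hg hq hwq hM

-- Cut `g` at height `l ^ (r / w)` and `f` at height `l`; these heights balance the two error terms.
lemma lintegral_mul_le (h : HasWeakLpBound g w A μ) (hg : AEMeasurable g μ)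
    (hf : AEMeasurable f μ) {q r t : ℝ} (hqr : q.HolderConjugate r) (hw : 1 < w) (hwq : w < q)
    (ht : 1 / t = 1 / w - 1 / q) (hfr : ∫⁻ x, f x ^ r ∂μ ≤ 1) {l : ℝ} (hl : 0 < l) :
    ∫⁻ x, g x * f x ∂μ ≤
      weakLpTruncationConst w q A * ENNReal.ofReal (l ^ (r / t)) +
        ∫⁻ x, (g x - ENNReal.ofReal (l ^ (r / w))) * (f x - ENNReal.ofReal l) ∂μ := by
  have hw0 : 0 < w := by linarith
  have hq0 : 0 < q := hqr.pos
  have hr0 : 0 < r := hqr.symm.pos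
  have hqw : 0 < q - w := sub_pos.2 hwq
  have hrt : r / t = r / w * (q - w) * (1 / q) := by
    rw [div_eq_mul_one_div r t, ht]
    field_simp
  set M := l ^ (r / w) with hM
  have hM0 : 0 < M := by positivity
  have hlow : ∫⁻ x, min (g x) (ENNReal.ofReal M) * f x ∂μ ≤
      (A * ENNReal.ofReal (q / (q - w))) ^ (1 / q) * ENNReal.ofReal (l ^ (r / t)) := by
    refine (h.lintegral_min_mul_le hg hf hqr hwq hM0.le).trans ?_
    rw [ENNReal.ofReal_mul (by positivity), ← mul_assoc,
      ENNReal.mul_rpow_of_nonneg _ _ (by positivity : 0 ≤ 1 / q),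
      ENNReal.ofReal_rpow_of_pos (by positivity), hM, ← Real.rpow_mul hl.le,
      ← Real.rpow_mul hl.le, ← hrt]
    exact mul_le_of_le_one_right' (ENNReal.rpow_le_one hfr (by positivity))
  have hhigh : (∫⁻ x, (g x - ENNReal.ofReal M) ∂μ) * ENNReal.ofReal l ≤
      A * ENNReal.ofReal (w - 1)⁻¹ * ENNReal.ofReal (l ^ (r / t)) := by
    refine (mul_le_mul_left (h.lintegral_tsub_le hg hw hM0) _).trans_eq ?_
    rw [ENNReal.ofReal_mul (by simpa using hw.le), div_eq_one_add_div_mul_one_sub hqr hw0.ne' ht,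
      Real.rpow_add hl, Real.rpow_one, ENNReal.ofReal_mul hl.le, hM, Real.rpow_mul hl.le]
    ring
  calc ∫⁻ x, g x * f x ∂μ
      ≤ ∫⁻ x, min (g x) (ENNReal.ofReal M) * f x ∂μ +
          (∫⁻ x, (g x - ENNReal.ofReal M) ∂μ) * ENNReal.ofReal l +
          ∫⁻ x, (g x - ENNReal.ofReal M) * (f x - ENNReal.ofReal l) ∂μ :=
        lintegral_mul_le_lintegral_min_mul_add hg hf _ _
    _ ≤ _ := by
        rw [weakLpTruncationConst, add_mul]
        gcongr

end HasWeakLpBound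

end WeakLebesgue

section WeakYoung

variable {α β : Type*} [MeasurableSpace α] [MeasurableSpace β] {μ : Measure α} {ν : Measure β}
  {k : α → β → ℝ≥0∞} {f : β → ℝ≥0∞} {w : ℝ} {A : ℝ≥0}

lemma lintegral_lintegral_kernel_mul_rpow_eq_rpow_mul {c : ℝ≥0∞} (hc0 : c ≠ 0) (hctop : c ≠ ∞)
    {t : ℝ} (ht : 0 ≤ t) :
    ∫⁻ x, (∫⁻ y, k x y * f y ∂ν) ^ t ∂μ =
      c ^ t * ∫⁻ x, (∫⁻ y, k x y * (c⁻¹ * f y) ∂ν) ^ t ∂μ := by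
  rw [← lintegral_const_mul' _ _ (by finiteness)]
  refine lintegral_congr fun x ↦ ?_
  rw [← ENNReal.mul_rpow_of_nonneg _ _ ht, ← lintegral_const_mul' _ _ hctop]
  congr 1
  refine lintegral_congr fun y ↦ ?_
  rw [mul_left_comm (k x y), ENNReal.mul_inv_cancel_left hc0 hctop]

variable [SFinite ν]

lemma aemeasurable_lintegral_kernel_mul (hk : Measurable (uncurry k))
    (hf : AEMeasurable f ν) : AEMeasurable (fun x ↦ ∫⁻ y, k x y * f y ∂ν) μ :=
  (hk.aemeasurable.mul hf.comp_snd).lintegral_prod_right'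

variable [SFinite μ]

lemma lintegral_lintegral_tsub_mul_le (hk : Measurable (uncurry k))
    (hk_left : ∀ y, HasWeakLpBound (fun x ↦ k x y) w A μ) (hw : 1 < w) (hf : AEMeasurable f ν)
    {M : ℝ} (hM : 0 < M) :
    ∫⁻ x, ∫⁻ y, (k x y - ENNReal.ofReal M) * f y ∂ν ∂μ ≤
      A * ENNReal.ofReal ((w - 1)⁻¹ * M ^ (1 - w)) * ∫⁻ y, f y ∂ν := by
  have hk_section (y : β) : Measurable fun x ↦ k x y := hk.of_uncurry_right
  calc ∫⁻ x, ∫⁻ y, (k x y - ENNReal.ofReal M) * f y ∂ν ∂μ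
      = ∫⁻ y, (∫⁻ x, (k x y - ENNReal.ofReal M) ∂μ) * f y ∂ν := by
        rw [lintegral_lintegral_swap
          ((hk.sub measurable_const).aemeasurable.mul hf.comp_snd)]
        refine lintegral_congr fun y ↦ ?_
        exact lintegral_mul_const _ ((hk_section y).sub measurable_const)
    _ ≤ ∫⁻ y, A * ENNReal.ofReal ((w - 1)⁻¹ * M ^ (1 - w)) * f y ∂ν := by
        gcongr with y
        exact (hk_left y).lintegral_tsub_le (hk_section y).aemeasurable hw hM
    _ = _ := lintegral_const_mul'' _ hf

lemma meas_lt_lintegral_kernel_mul_le (hk : Measurable (uncurry k))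
    (hk_right : ∀ x, HasWeakLpBound (k x) w A ν)
    (hk_left : ∀ y, HasWeakLpBound (fun x ↦ k x y) w A μ)
    {q r t : ℝ} (hqr : q.HolderConjugate r) (hw : 1 < w) (hwq : w < q)
    (ht : 1 / t = 1 / w - 1 / q) (hf : AEMeasurable f ν) (hfr : ∫⁻ y, f y ^ r ∂ν ≤ 1)
    {l : ℝ} (hl : 0 < l) :
    μ {x | (weakLpTruncationConst w q A + 1) * ENNReal.ofReal (l ^ (r / t)) <
        ∫⁻ y, k x y * f y ∂ν} ≤
      A * ENNReal.ofReal (w - 1)⁻¹ * ENNReal.ofReal l⁻¹ *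
        ∫⁻ y in {y | ENNReal.ofReal l < f y}, f y ∂ν := by
  set c := weakLpTruncationConst w q A
  set M := l ^ (r / w) with hM
  have hM0 : 0 < M := by positivity
  set E : α → ℝ≥0∞ := fun x ↦ ∫⁻ y, (k x y - ENNReal.ofReal M) * (f y - ENNReal.ofReal l) ∂ν
  have hE : AEMeasurable E μ :=
    aemeasurable_lintegral_kernel_mul (hk.sub measurable_const) (hf.sub aemeasurable_const)
  have hlevel : {x | (c + 1) * ENNReal.ofReal (l ^ (r / t)) < ∫⁻ y, k x y * f y ∂ν} ⊆
      {x | ENNReal.ofReal (l ^ (r / t)) ≤ E x} := by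
    intro x hx
    simp only [mem_ofPred_eq] at hx ⊢
    by_contra! hEx
    refine hx.not_ge ?_
    calc ∫⁻ y, k x y * f y ∂ν ≤ c * ENNReal.ofReal (l ^ (r / t)) + E x :=
          (hk_right x).lintegral_mul_le hk.of_uncurry_left.aemeasurable hf hqr hw hwq ht hfr hl
      _ ≤ (c + 1) * ENNReal.ofReal (l ^ (r / t)) := by
          rw [add_one_mul]
          gcongr
  have hexp : M ^ (1 - w) / l ^ (r / t) = l⁻¹ := by
    rw [hM, ← Real.rpow_mul hl.le, ← Real.rpow_sub hl, ← Real.rpow_neg_one,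
      div_eq_one_add_div_mul_one_sub hqr (by linarith) ht, sub_add_cancel_right]
  calc _ ≤ μ {x | ENNReal.ofReal (l ^ (r / t)) ≤ E x} := measure_mono hlevel
    _ ≤ (∫⁻ x, E x ∂μ) / ENNReal.ofReal (l ^ (r / t)) :=
        meas_ge_le_lintegral_div hE (ENNReal.ofReal_pos.2 (by positivity)).ne' ENNReal.ofReal_ne_top
    _ ≤ (A * ENNReal.ofReal ((w - 1)⁻¹ * M ^ (1 - w)) * ∫⁻ y, (f y - ENNReal.ofReal l) ∂ν) /
          ENNReal.ofReal (l ^ (r / t)) := by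
        gcongr
        exact lintegral_lintegral_tsub_mul_le hk hk_left hw (hf.sub aemeasurable_const) hM0
    _ = A * ENNReal.ofReal (w - 1)⁻¹ * ENNReal.ofReal l⁻¹ *
          ∫⁻ y, (f y - ENNReal.ofReal l) ∂ν := by
        rw [← hexp, ENNReal.ofReal_div_of_pos (by positivity),
          ENNReal.ofReal_mul (by simpa using hw.le)]
        simp only [div_eq_mul_inv]
        ring
    _ ≤ _ := mul_le_mul_right (lintegral_tsub_le_setLIntegral_lt hf _) _

lemma lintegral_lintegral_kernel_mul_rpow_le_of_lintegral_rpow_le_one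
    (hk : Measurable (uncurry k)) (hk_right : ∀ x, HasWeakLpBound (k x) w A ν)
    (hk_left : ∀ y, HasWeakLpBound (fun x ↦ k x y) w A μ)
    {q r t : ℝ} (hqr : q.HolderConjugate r) (hw : 1 < w) (hwq : w < q)
    (ht : 1 / t = 1 / w - 1 / q) (hf : AEMeasurable f ν) (hfr : ∫⁻ y, f y ^ r ∂ν ≤ 1) :
    ∫⁻ x, (∫⁻ y, k x y * f y ∂ν) ^ t ∂μ ≤
      (weakLpTruncationConst w q A + 1) ^ t *
        (A * ENNReal.ofReal (w - 1)⁻¹ * ENNReal.ofReal (r / (r - 1))) := by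
  have hr0 : 0 < r := hqr.symm.pos
  have ht0 : 0 < t := by
    rw [← one_div_pos, ht, sub_pos]
    exact one_div_lt_one_div_of_lt (by linarith) hwq
  set D := A * ENNReal.ofReal (w - 1)⁻¹
  have hD : D ≠ ∞ := by finiteness
  set c := weakLpTruncationConst w q A + 1 with hc_def
  have hc0 : c ≠ 0 := by simp [hc_def]
  have hc : c ≠ ∞ :=
    ENNReal.add_ne_top.2 ⟨weakLpTruncationConst_ne_top hqr.nonneg, ENNReal.one_ne_top⟩
  set T : α → ℝ≥0∞ := fun x ↦ ∫⁻ y, k x y * f y ∂ν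
  have hT : AEMeasurable T μ := aemeasurable_lintegral_kernel_mul hk hf
  have hlevel (l : ℝ) (hl : 0 < l) (x : α) :
      ENNReal.ofReal l < (T x / c) ^ (t / r) ↔ c * ENNReal.ofReal (l ^ (r / t)) < T x := by
    rw [← inv_div r t, ENNReal.lt_rpow_inv_iff (by positivity), ENNReal.ofReal_rpow_of_pos hl,
      ENNReal.lt_div_iff_mul_lt (Or.inl hc0) (Or.inl hc), mul_comm]
  calc ∫⁻ x, T x ^ t ∂μ = c ^ t * ∫⁻ x, ((T x / c) ^ (t / r)) ^ r ∂μ := by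
        rw [← lintegral_const_mul'' _ (by fun_prop)]
        refine lintegral_congr fun x ↦ ?_
        rw [← ENNReal.rpow_mul, div_mul_cancel₀ _ hr0.ne', ← ENNReal.mul_rpow_of_nonneg _ _ ht0.le,
          ENNReal.mul_div_cancel hc0 hc]
    _ ≤ c ^ t * (D * ENNReal.ofReal (r / (r - 1)) * ∫⁻ y, f y ^ r ∂ν) := by
        gcongr c ^ t * ?_
        refine lintegral_rpow_le_of_forall_meas_lt_le (by fun_prop) hf hD hqr.symm.lt fun l hl ↦ ?_
        simp only [hlevel l hl]
        exact meas_lt_lintegral_kernel_mul_le hk hk_right hk_left hqr hw hwq ht hf hfr hl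
    _ ≤ c ^ t * (D * ENNReal.ofReal (r / (r - 1))) := by
        gcongr c ^ t * ?_
        exact mul_le_of_le_one_right' hfr

lemma exists_lintegral_lintegral_kernel_mul_rpow_le_of_lintegral_rpow_le_one
    (hk : Measurable (uncurry k)) (hk_right : ∀ x, HasWeakLpBound (k x) w A ν)
    (hk_left : ∀ y, HasWeakLpBound (fun x ↦ k x y) w A μ)
    {r t : ℝ} (hr : 1 < r) (hw : 1 < w) (ht0 : 0 < t) (ht : 1 / t + 1 = 1 / r + 1 / w) :
    ∃ C : ℝ≥0∞, C ≠ ∞ ∧ ∀ f : β → ℝ≥0∞, AEMeasurable f ν → ∫⁻ y, f y ^ r ∂ν ≤ 1 →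
      ∫⁻ x, (∫⁻ y, k x y * f y ∂ν) ^ t ∂μ ≤ C := by
  obtain ⟨q, hrq⟩ : ∃ q, r.HolderConjugate q := ⟨_, .conjExponent hr⟩
  have hq0 : 0 < q := hrq.symm.pos
  have htq : 1 / t = 1 / w - 1 / q := by
    rw [one_div q, ← hrq.one_sub_inv]
    linear_combination ht
  have hwq : w < q := by
    have : 1 / q < 1 / w := by linarith [one_div_pos.2 ht0]
    exact (one_div_lt_one_div hq0 (by linarith)).1 this
  refine ⟨_, ?_, fun f hf hfr ↦ lintegral_lintegral_kernel_mul_rpow_le_of_lintegral_rpow_le_one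
    hk hk_right hk_left hrq.symm hw hwq htq hf hfr⟩
  have hc : weakLpTruncationConst w q A ≠ ∞ := weakLpTruncationConst_ne_top hq0.le
  finiteness

theorem exists_lintegral_lintegral_kernel_mul_rpow_le
    (hk : Measurable (uncurry k)) (hk_right : ∀ x, HasWeakLpBound (k x) w A ν)
    (hk_left : ∀ y, HasWeakLpBound (fun x ↦ k x y) w A μ)
    {r t : ℝ} (hr : 1 < r) (hw : 1 < w) (ht0 : 0 < t) (ht : 1 / t + 1 = 1 / r + 1 / w) :
    ∃ C : ℝ≥0, 0 < C ∧ ∀ f : β → ℝ≥0∞, AEMeasurable f ν →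
      (∫⁻ x, (∫⁻ y, k x y * f y ∂ν) ^ t ∂μ) ^ (1 / t) ≤ C * (∫⁻ y, f y ^ r ∂ν) ^ (1 / r) := by
  have hr0 : 0 < r := by linarith
  obtain ⟨C, hC, h⟩ := exists_lintegral_lintegral_kernel_mul_rpow_le_of_lintegral_rpow_le_one
    hk hk_right hk_left hr hw ht0 ht
  have hCt : C ^ (1 / t) ≠ ∞ := by finiteness
  refine ⟨(C ^ (1 / t)).toNNReal + 1, by positivity, fun f hf ↦ ?_⟩
  rw [ENNReal.coe_add, ENNReal.coe_toNNReal hCt, ENNReal.coe_one]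
  set c := (∫⁻ y, f y ^ r ∂ν) ^ (1 / r) with hc
  have hcr : c ^ r = ∫⁻ y, f y ^ r ∂ν := by
    rw [hc, ← ENNReal.rpow_mul, one_div_mul_cancel hr0.ne', ENNReal.rpow_one]
  rcases eq_or_ne c ∞ with hctop | hctop
  · simp [hctop]
  rcases eq_or_ne c 0 with hc0 | hc0
  · have hf0 : f =ᵐ[ν] 0 := by
      refine ENNReal.ae_eq_zero_of_lintegral_rpow_eq_zero hr0.le hf ?_
      rw [← hcr, hc0, ENNReal.zero_rpow_of_pos hr0]
    have hT0 (x : α) : ∫⁻ y, k x y * f y ∂ν = 0 := by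
      rw [lintegral_congr_ae (hf0.mono fun y hy ↦ by rw [hy, Pi.zero_apply, mul_zero]),
        lintegral_zero]
    simp [hT0, ht0]
  have hnormalized : ∫⁻ y, (c⁻¹ * f y) ^ r ∂ν ≤ 1 := by
    simp_rw [ENNReal.mul_rpow_of_nonneg _ _ hr0.le]
    rw [lintegral_const_mul'' _ (by fun_prop), ENNReal.inv_rpow, ← hcr,
      ENNReal.inv_mul_cancel (by simp [hc0, hctop]) (by finiteness)]
  calc (∫⁻ x, (∫⁻ y, k x y * f y ∂ν) ^ t ∂μ) ^ (1 / t) ≤ (c ^ t * C) ^ (1 / t) := by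
        rw [lintegral_lintegral_kernel_mul_rpow_eq_rpow_mul hc0 hctop ht0.le]
        gcongr
        exact h _ (by fun_prop) hnormalized
    _ = C ^ (1 / t) * c := by
        rw [ENNReal.mul_rpow_of_nonneg _ _ (by positivity), ← ENNReal.rpow_mul,
          mul_one_div_cancel ht0.ne', ENNReal.rpow_one, mul_comm]
    _ ≤ _ := by
        gcongr
        exact le_self_add

end WeakYoung

section RieszPotential

/-- Upper Ahlfors regularity of dimension `d` with constant `A`: balls of radius `R` have measure
at most `A * R ^ d`. -/
def IsUpperAhlforsRegular {X : Type*} [PseudoMetricSpace X] [MeasurableSpace X] (μ : Measure X)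
    (d : ℝ) (A : ℝ≥0) : Prop :=
  ∀ (x : X) (R : ℝ), 0 < R → μ (Metric.ball x R) ≤ A * ENNReal.ofReal (R ^ d)

lemma isUpperAhlforsRegular_addHaar {E : Type*} [NormedAddCommGroup E] [NormedSpace ℝ E]
    [FiniteDimensional ℝ E] [MeasurableSpace E] [BorelSpace E] (μ : Measure E)
    [μ.IsAddHaarMeasure] {n : ℕ} (hn : Module.finrank ℝ E = n) :
    IsUpperAhlforsRegular μ n (μ (Metric.ball 0 1)).toNNReal := by
  intro x R hR
  rw [Measure.addHaar_ball_of_pos μ x hR, hn, Real.rpow_natCast,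
    ENNReal.coe_toNNReal measure_ball_lt_top.ne, mul_comm]

/-- The Riesz potential `x ↦ ∫ f(y) / dist(x, y) ^ σ dμ(y)`. Since `0⁻¹ = 0`, for `σ ≠ 0` the
kernel takes the junk value `0` where `dist x y = 0`. -/
noncomputable def rieszPotential {X : Type*} [PseudoMetricSpace X] [MeasurableSpace X] (σ : ℝ)
    (μ : Measure X) (f : X → ℝ≥0∞) (x : X) : ℝ≥0∞ :=
  ∫⁻ y, ENNReal.ofReal (dist x y ^ σ)⁻¹ * f y ∂μ

variable {X : Type*} [PseudoMetricSpace X] [MeasurableSpace X] {μ : Measure X} {d σ : ℝ} {A : ℝ≥0}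

lemma rieszPotential_ofReal {F : Type*} [NormedAddCommGroup F] {q : ℝ} (hq : 0 ≤ q) (u : X → F)
    (x : X) : rieszPotential σ μ (fun y ↦ ENNReal.ofReal ‖u y‖ ^ q) x =
      ∫⁻ y, ENNReal.ofReal (‖u y‖ ^ q / dist x y ^ σ) ∂μ := by
  refine lintegral_congr fun y ↦ ?_
  beta_reduce
  rw [ENNReal.ofReal_rpow_of_nonneg (norm_nonneg _) hq, ← ENNReal.ofReal_mul (by positivity),
    inv_mul_eq_div]

lemma IsUpperAhlforsRegular.hasWeakLpBound_dist_rpow_inv (hμ : IsUpperAhlforsRegular μ d A)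
    (hσ : 0 < σ) (x : X) :
    HasWeakLpBound (fun y ↦ ENNReal.ofReal (dist x y ^ σ)⁻¹) (d / σ) A μ := by
  intro l hl
  have hball : {y | ENNReal.ofReal l < ENNReal.ofReal (dist x y ^ σ)⁻¹} ⊆
      Metric.ball x (l ^ (-σ⁻¹)) := by
    intro y (hy : _ < ENNReal.ofReal _)
    have hlt : l < (dist x y ^ σ)⁻¹ := (ENNReal.ofReal_lt_ofReal_iff_of_nonneg hl.le).1 hy
    rw [Metric.mem_ball', Real.rpow_neg hl.le, ← Real.inv_rpow hl.le,
      Real.lt_rpow_inv_iff_of_pos dist_nonneg (by positivity) hσ]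
    exact lt_inv_of_lt_inv₀ hl hlt
  refine (measure_mono hball).trans ((hμ x _ (by positivity)).trans_eq ?_)
  rw [← Real.rpow_mul hl.le, neg_mul, inv_mul_eq_div]

variable [SecondCountableTopology X]

lemma IsUpperAhlforsRegular.sigmaFinite (hμ : IsUpperAhlforsRegular μ d A) : SigmaFinite μ := by
  have : IsLocallyFiniteMeasure μ :=
    ⟨fun x ↦ ⟨Metric.ball x 1, Metric.ball_mem_nhds x one_pos,
      (hμ x 1 one_pos).trans_lt (by finiteness)⟩⟩
  infer_instance

variable [OpensMeasurableSpace X]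

lemma measurable_uncurry_dist_rpow_inv :
    Measurable (uncurry fun x y : X ↦ ENNReal.ofReal (dist x y ^ σ)⁻¹) := by
  unfold uncurry
  fun_prop

lemma aemeasurable_rieszPotential [SFinite μ] {f : X → ℝ≥0∞} (hf : AEMeasurable f μ) :
    AEMeasurable (rieszPotential σ μ f) μ :=
  aemeasurable_lintegral_kernel_mul measurable_uncurry_dist_rpow_inv hf

theorem IsUpperAhlforsRegular.exists_lintegral_rieszPotential_rpow_le
    (hμ : IsUpperAhlforsRegular μ d A) (hσ : 0 < σ) (hσd : σ < d) {r t : ℝ} (hr : 1 < r)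
    (ht0 : 0 < t) (ht : 1 / t + 1 = 1 / r + σ / d) :
    ∃ C : ℝ≥0, 0 < C ∧ ∀ f : X → ℝ≥0∞, AEMeasurable f μ →
      (∫⁻ x, rieszPotential σ μ f x ^ t ∂μ) ^ (1 / t) ≤ C * (∫⁻ y, f y ^ r ∂μ) ^ (1 / r) :=
  have := hμ.sigmaFinite
  exists_lintegral_lintegral_kernel_mul_rpow_le measurable_uncurry_dist_rpow_inv
    (hμ.hasWeakLpBound_dist_rpow_inv hσ)
    (fun y ↦ by simpa only [dist_comm y] using hμ.hasWeakLpBound_dist_rpow_inv hσ y)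
    hr ((one_lt_div hσ).2 hσd) ht0 (by rwa [one_div_div])

end RieszPotential

section Choquard

lemma lintegral_mul_rpow_rpow_le {α : Type*} [MeasurableSpace α] {μ : Measure α}
    {F f : α → ℝ≥0∞} (hF : AEMeasurable F μ) (hf : AEMeasurable f μ) {e m t P : ℝ} (he : 0 ≤ e)
    (ht : 0 < t) (hP : 0 < P) (hm : 1 / m = 1 / t + e / P) :
    (∫⁻ x, (F x * f x ^ e) ^ m ∂μ) ^ (1 / m) ≤
      (∫⁻ x, F x ^ t ∂μ) ^ (1 / t) * (∫⁻ x, f x ^ P ∂μ) ^ (e / P) := by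
  have hm0 : 0 < m := one_div_pos.1 (hm ▸ by positivity)
  have hweights : 1 / t * m + e / P * m = 1 := by
    rw [← add_mul, ← hm, one_div_mul_cancel hm0.ne']
  have hsplit (x : α) :
      (F x * f x ^ e) ^ m = (F x ^ t) ^ (1 / t * m) * (f x ^ P) ^ (e / P * m) := by
    rw [ENNReal.mul_rpow_of_nonneg _ _ hm0.le, ← ENNReal.rpow_mul, ← ENNReal.rpow_mul,
      ← ENNReal.rpow_mul, ← mul_assoc, mul_one_div_cancel ht.ne', one_mul, ← mul_assoc,
      mul_div_cancel₀ _ hP.ne']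
  calc (∫⁻ x, (F x * f x ^ e) ^ m ∂μ) ^ (1 / m)
      ≤ ((∫⁻ x, F x ^ t ∂μ) ^ (1 / t * m) * (∫⁻ x, f x ^ P ∂μ) ^ (e / P * m)) ^ (1 / m) := by
        simp_rw [hsplit]
        gcongr
        exact ENNReal.lintegral_mul_norm_pow_le (by fun_prop) (by fun_prop) (by positivity)
          (by positivity) hweights
    _ = _ := by
        rw [ENNReal.mul_rpow_of_nonneg _ _ (by positivity), ← ENNReal.rpow_mul,
          ← ENNReal.rpow_mul, mul_assoc, mul_assoc, mul_one_div_cancel hm0.ne', mul_one, mul_one]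

variable {X : Type*} [PseudoMetricSpace X] [SecondCountableTopology X] [MeasurableSpace X]
  [OpensMeasurableSpace X] {μ : Measure X} {d p s σ : ℝ} {A : ℝ≥0}

theorem IsUpperAhlforsRegular.exists_lintegral_rieszPotential_rpow_mul_rpow_le
    (hμ : IsUpperAhlforsRegular μ d A) (hσ : 0 < σ) (hσd : σ < d) {P q e m : ℝ} (hq : 0 < q)
    (hqP : q < P) (he : 0 ≤ e) (hqσ : (d - σ) / d < q / P)
    (hm : 1 / m = (q + e) / P - (d - σ) / d) :
    ∃ C : ℝ≥0, 0 < C ∧ ∀ f : X → ℝ≥0∞, AEMeasurable f μ →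
      (∫⁻ x, (rieszPotential σ μ (fun y ↦ f y ^ q) x * f x ^ e) ^ m ∂μ) ^ (1 / m) ≤
        C * (∫⁻ x, f x ^ P ∂μ) ^ ((q + e) / P) := by
  have hP : 0 < P := hq.trans hqP
  have hd : 0 < d := hσ.trans hσd
  have := hμ.sigmaFinite
  set t := (q / P - (d - σ) / d)⁻¹ with ht
  have ht0 : 0 < t := inv_pos.2 (sub_pos.2 hqσ)
  have ht' : 1 / t + 1 = 1 / (P / q) + σ / d := by
    rw [ht, one_div, inv_inv, one_div_div]
    field_simp
    ring
  have hmt : 1 / m = 1 / t + e / P := by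
    rw [hm, ht, one_div, inv_inv]
    ring
  obtain ⟨C, hC, hHLS⟩ :=
    hμ.exists_lintegral_rieszPotential_rpow_le hσ hσd ((one_lt_div hq).2 hqP) ht0 ht'
  refine ⟨C, hC, fun f hf ↦ ?_⟩
  have hfq : AEMeasurable (fun y ↦ f y ^ q) μ := hf.pow_const q
  calc (∫⁻ x, (rieszPotential σ μ (fun y ↦ f y ^ q) x * f x ^ e) ^ m ∂μ) ^ (1 / m)
      ≤ (∫⁻ x, rieszPotential σ μ (fun y ↦ f y ^ q) x ^ t ∂μ) ^ (1 / t) *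
          (∫⁻ x, f x ^ P ∂μ) ^ (e / P) :=
        lintegral_mul_rpow_rpow_le (aemeasurable_rieszPotential hfq) hf he ht0 hP hmt
    _ ≤ C * (∫⁻ x, f x ^ P ∂μ) ^ (q / P) * (∫⁻ x, f x ^ P ∂μ) ^ (e / P) := by
        gcongr
        simpa only [← ENNReal.rpow_mul, mul_div_cancel₀ P hq.ne', one_div_div] using hHLS _ hfq
    _ = C * (∫⁻ x, f x ^ P ∂μ) ^ ((q + e) / P) := by
        rw [mul_assoc, ← ENNReal.rpow_add_of_nonneg _ _ (by positivity) (by positivity), add_div]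

/-- The exponent `p_{s,σ}` of `pcrit`, with the dimension `N` replaced by a real number `d`. -/
noncomputable def choquardExponent (d p s σ : ℝ) : ℝ :=
  (2 * d - σ - s) * p / (2 * (d - p))

lemma choquardExponent_div_eq (hp : p ≠ 0) (hdp : d - p ≠ 0) :
    choquardExponent d p s σ / (d * p / (d - p)) = (2 * d - σ - s) / (2 * d) := by
  rw [choquardExponent]
  field_simp

lemma le_choquardExponent (hp : 0 ≤ p) (hpd : p < d) (hss : σ + s ≤ 2 * p) :
    p ≤ choquardExponent d p s σ := by
  have : 0 < d - p := sub_pos.2 hpd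
  rw [choquardExponent, le_div_iff₀ (by positivity), mul_comm p]
  gcongr
  linarith

theorem IsUpperAhlforsRegular.exists_lintegral_rieszPotential_choquardExponent_le
    (hμ : IsUpperAhlforsRegular μ d A) (hpd : p < d) (hsσ : s < σ) (hσd : σ < d)
    (hss0 : 0 < σ + s) (hss : σ + s ≤ 2 * p) :
    ∃ C : ℝ≥0, 0 < C ∧ ∀ f : X → ℝ≥0∞, AEMeasurable f μ →
      (∫⁻ x, (rieszPotential σ μ (fun y ↦ f y ^ choquardExponent d p s σ) x *
          f x ^ (choquardExponent d p s σ - p)) ^ (d / (p - s)) ∂μ) ^ ((p - s) / d) ≤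
        C * ((∫⁻ x, f x ^ (d * p / (d - p)) ∂μ) ^ ((d - p) / (d * p))) ^
          (2 * choquardExponent d p s σ - p) := by
  have hp : 0 < p := by linarith
  have hd : 0 < d := hp.trans hpd
  have hdp : 0 < d - p := sub_pos.2 hpd
  set q := choquardExponent d p s σ
  have hP : 0 < d * p / (d - p) := by positivity
  have hqP : q / (d * p / (d - p)) = (2 * d - σ - s) / (2 * d) :=
    choquardExponent_div_eq hp.ne' hdp.ne'
  have hpq : p ≤ q := le_choquardExponent hp.le hpd hss
  have hqlt : q < d * p / (d - p) := by
    rw [← div_lt_one hP, hqP, div_lt_one (by positivity)]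
    linarith
  have hqσ : (d - σ) / d < q / (d * p / (d - p)) := by
    rw [hqP, ← mul_div_mul_left (d - σ) d two_ne_zero]
    gcongr
    linarith
  have hm : 1 / (d / (p - s)) = (q + (q - p)) / (d * p / (d - p)) - (d - σ) / d := by
    have hpP : p / (d * p / (d - p)) = (d - p) / d := by field_simp
    rw [one_div_div, add_div, sub_div q, hqP, hpP]
    field_simp
    ring
  obtain ⟨C, hC, h⟩ :=
    hμ.exists_lintegral_rieszPotential_rpow_mul_rpow_le (by linarith) hσd (hp.trans_le hpq) hqlt
      (sub_nonneg.2 hpq) hqσ hm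
  refine ⟨C, hC, fun f hf ↦ ?_⟩
  rw [← ENNReal.rpow_mul, ← one_div_div (d * p), one_div_mul_eq_div, ← one_div_div d,
    show 2 * q - p = q + (q - p) by ring]
  exact h f hf

theorem stmt_14_general {F : Type*} [NormedAddCommGroup F] (hμ : IsUpperAhlforsRegular μ d A)
    (hpd : p < d) (hsσ : s < σ) (hσd : σ < d) (hss0 : 0 < σ + s) (hss : σ + s ≤ 2 * p) :
    ∃ Cbar : ℝ, 0 < Cbar ∧ ∀ u : X → F, AEStronglyMeasurable u μ →
      (∫⁻ x, ENNReal.ofReal (‖u x‖ ^ (d * p / (d - p))) ∂μ) < ⊤ →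
      (∫⁻ x, ((∫⁻ y, ENNReal.ofReal (‖u y‖ ^ choquardExponent d p s σ / dist x y ^ σ) ∂μ) *
          ENNReal.ofReal (‖u x‖ ^ (choquardExponent d p s σ - p))) ^ (d / (p - s)) ∂μ) < ⊤ ∧
      (∫⁻ x, ((∫⁻ y, ENNReal.ofReal (‖u y‖ ^ choquardExponent d p s σ / dist x y ^ σ) ∂μ) *
          ENNReal.ofReal (‖u x‖ ^ (choquardExponent d p s σ - p))) ^ (d / (p - s)) ∂μ) ^
            ((p - s) / d) ≤
        ENNReal.ofReal Cbar *
          ((∫⁻ x, ENNReal.ofReal (‖u x‖ ^ (d * p / (d - p))) ∂μ) ^ ((d - p) / (d * p))) ^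
            (2 * choquardExponent d p s σ - p) := by
  have hp : 0 < p := by linarith
  have hd : 0 < d := hp.trans hpd
  have : 0 < d - p := sub_pos.2 hpd
  have hpq : p ≤ choquardExponent d p s σ := le_choquardExponent hp.le hpd hss
  obtain ⟨C, hC, h⟩ :=
    hμ.exists_lintegral_rieszPotential_choquardExponent_le hpd hsσ hσd hss0 hss
  refine ⟨C, hC, fun u hu hfin ↦ ?_⟩
  have hbound := h _ hu.norm.aemeasurable.ennreal_ofReal
  simp_rw [rieszPotential_ofReal (hp.le.trans hpq),
    ENNReal.ofReal_rpow_of_nonneg (norm_nonneg _) (sub_nonneg.2 hpq),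
    ENNReal.ofReal_rpow_of_nonneg (norm_nonneg _) (by positivity : 0 ≤ d * p / (d - p))] at hbound
  rw [ENNReal.ofReal_coe_nnreal]
  refine ⟨?_, hbound⟩
  rw [← ENNReal.rpow_lt_top_iff_of_pos (y := (p - s) / d) (div_pos (by linarith) hd)]
  exact hbound.trans_lt (ENNReal.mul_lt_top ENNReal.coe_lt_top (ENNReal.rpow_lt_top_of_nonneg
    (by linarith) (ENNReal.rpow_ne_top_of_nonneg (by positivity) hfin.ne)))

end Choquard

/-- Estimate (1.17): for `u ∈ L^{p⋆}(ℝ^N)` the potential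
`V₃(x) = (∫ |u(y)|^{p_{s,σ}} / |x-y|^σ dy) |u(x)|^{p_{s,σ}-p}` lies in
`L^{N/(p-s)}(ℝ^N)` with `‖V₃‖_{N/(p-s)} ≤ C̄ ‖u‖_{p⋆}^{2p_{s,σ}-p}`. -/
theorem stmt_14 (N : ℕ) (hN : 2 ≤ N) (p s σ : ℝ) (hp1 : 1 < p) (hpN : p < (N : ℝ))
    (hs0 : 0 ≤ s) (hsp : s < p) (hsσ : s < σ) (hσN : σ < (N : ℝ))
    (hss0 : 0 < σ + s) (hss : σ + s ≤ 2 * p) :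
    ∃ Cbar : ℝ, 0 < Cbar ∧ ∀ u : EuclideanSpace ℝ (Fin N) → ℝ, Measurable u →
      (∫⁻ x, ENNReal.ofReal (|u x| ^ ((N : ℝ) * p / ((N : ℝ) - p)))) < ⊤ →
      (∫⁻ x, ((∫⁻ y, ENNReal.ofReal (|u y| ^ pcrit N p s σ / ‖x - y‖ ^ σ)) *
          ENNReal.ofReal (|u x| ^ (pcrit N p s σ - p))) ^ ((N : ℝ) / (p - s))) < ⊤ ∧
      (∫⁻ x, ((∫⁻ y, ENNReal.ofReal (|u y| ^ pcrit N p s σ / ‖x - y‖ ^ σ)) *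
          ENNReal.ofReal (|u x| ^ (pcrit N p s σ - p))) ^ ((N : ℝ) / (p - s))) ^
            ((p - s) / (N : ℝ)) ≤
        ENNReal.ofReal Cbar *
          ((∫⁻ x, ENNReal.ofReal (|u x| ^ ((N : ℝ) * p / ((N : ℝ) - p)))) ^
            (((N : ℝ) - p) / ((N : ℝ) * p))) ^ (2 * pcrit N p s σ - p) := by
  obtain ⟨C, hC, h⟩ := stmt_14_general (F := ℝ)
    (isUpperAhlforsRegular_addHaar volume finrank_euclideanSpace_fin) hpN hsσ hσN hss0 hss
  exact ⟨C, hC, fun u hu ↦ by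
    simpa only [dist_eq_norm, Real.norm_eq_abs, pcrit, choquardExponent] using
      h u hu.aestronglyMeasurable⟩
end

section
/- Let N ≥ 3, 1 < p < N/2 and 0 ≤ μ < μ̄ := ((N−p)/p)^p. There exists a constant C = C(N,p,μ) > 0 such that for every smooth compactly supported function u : ℝ^N → ℝ one has (∬_{ℝ^N×ℝ^N} |u(x)|^p |u(y)|^p / |x−y|^{2p} dx dy)^{1/(2p)} ≤ C · (∫_{ℝ^N} |∇u|^p dx − μ ∫_{ℝ^N} |u(x)|^p/|x|^p dx)^{1/p}, where the quantity inside the parentheses on the right-hand side is nonnegative by Hardy's inequality. -/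
open MeasureTheory

/-!
Along the ray through `x`, a compactly supported function satisfies
`|u(x)| ≤ ∫₁^∞ |∇u(tx)| |tx| dt/t`. Jensen's inequality for the weight `t ^ (-1 - b)` with
`b = (d - s) / p`, followed by the substitution `x ↦ x / t`, turns this into the sharp weighted
Hardy inequality `∫ |u|^p |x|^(-s) ≤ (p / (d - s))^p ∫ |∇u|^p |x|^(p - s)` for `s < d`.

Used with `s = 2p` in `y` around `x`, and then with `s = p` in `x` around `y`, it bounds the double
integral by a multiple of `(∫ |∇u|^p)²`. Used with `s = p` around the origin, its sharp constant
shows that subtracting `μ ∫ |u|^p / |x|^p` leaves a positive proportion of `∫ |∇u|^p`.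
-/

open Module Set

theorem rpow_lintegral_mul_le {α : Type*} [MeasurableSpace α] {ν : Measure α} {p : ℝ} (hp : 1 ≤ p)
    {w f : α → ENNReal} (hw : AEMeasurable w ν) (hf : AEMeasurable f ν) :
    (∫⁻ a, w a * f a ∂ν) ^ p ≤ (∫⁻ a, w a ∂ν) ^ (p - 1) * ∫⁻ a, w a * f a ^ p ∂ν := by
  have hp0 : 0 < p := by positivity
  have hpinv : 0 ≤ 1 - p⁻¹ := sub_nonneg.2 (inv_le_one_of_one_le₀ hp)
  have split (a : α) : w a ^ (1 - p⁻¹) * (w a * f a ^ p) ^ p⁻¹ = w a * f a := by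
    rw [ENNReal.mul_rpow_of_nonneg _ _ (by positivity), ENNReal.rpow_rpow_inv hp0.ne',
      ← mul_assoc, ← ENNReal.rpow_add_of_nonneg _ _ hpinv (by positivity), sub_add_cancel,
      ENNReal.rpow_one]
  have holder := ENNReal.lintegral_mul_norm_pow_le hw (hw.mul (hf.pow_const p)) hpinv
    (inv_nonneg.2 hp0.le) (sub_add_cancel 1 p⁻¹)
  simp only [Pi.mul_apply, split] at holder
  calc (∫⁻ a, w a * f a ∂ν) ^ p
      ≤ ((∫⁻ a, w a ∂ν) ^ (1 - p⁻¹) * (∫⁻ a, w a * f a ^ p ∂ν) ^ p⁻¹) ^ p := by gcongr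
    _ = (∫⁻ a, w a ∂ν) ^ (p - 1) * ∫⁻ a, w a * f a ^ p ∂ν := by
      rw [ENNReal.mul_rpow_of_nonneg _ _ hp0.le, ← ENNReal.rpow_mul,
        ENNReal.rpow_inv_rpow hp0.ne', sub_mul, one_mul, inv_mul_cancel₀ hp0.ne']

section Conversion

variable {X V : Type*} [NormedAddCommGroup V]

theorem ofReal_norm_rpow {p : ℝ} (hp : 0 ≤ p) (x : V) :
    ENNReal.ofReal (‖x‖ ^ p) = ‖x‖ₑ ^ p := by
  rw [← ENNReal.ofReal_rpow_of_nonneg (norm_nonneg x) hp, ofReal_norm]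

-- At `x = 0` the left-hand side may vanish as a division by zero while the right-hand side is `⊤`.
theorem ofReal_div_norm_rpow_le (a s : ℝ) (x : V) :
    ENNReal.ofReal (a / ‖x‖ ^ s) ≤ ENNReal.ofReal a * ‖x‖ₑ ^ (-s) := by
  rcases eq_or_ne x 0 with rfl | hx
  · rcases eq_or_ne s 0 with rfl | hs
    · simp
    · simp [Real.zero_rpow hs]
  · have hx0 : 0 < ‖x‖ := norm_pos_iff.2 hx
    rw [ENNReal.ofReal_div_of_pos (by positivity), ← ENNReal.ofReal_rpow_of_pos hx0, ofReal_norm,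
      ENNReal.rpow_neg, div_eq_mul_inv]

theorem lintegral_enorm_rpow_eq_ofReal_integral [TopologicalSpace X] [R1Space X]
    [MeasurableSpace X] [OpensMeasurableSpace X] {ν : Measure X} [IsFiniteMeasureOnCompacts ν]
    {f : X → V} (hf : Continuous f) (hfc : HasCompactSupport f) {p : ℝ} (hp : 0 < p) :
    ∫⁻ x, ‖f x‖ₑ ^ p ∂ν = ENNReal.ofReal (∫ x, ‖f x‖ ^ p ∂ν) := by
  have hLp : MemLp f (ENNReal.ofReal p) ν := hf.memLp_of_hasCompactSupport hfc
  have hint : Integrable (fun x ↦ ‖f x‖ ^ p) ν := by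
    simpa [hp.le] using hLp.integrable_norm_rpow (by simpa using hp) ENNReal.ofReal_ne_top
  rw [ofReal_integral_eq_lintegral_ofReal hint (.of_forall fun x ↦ by positivity)]
  exact lintegral_congr fun x ↦ (ofReal_norm_rpow hp.le _).symm

end Conversion

/-! ### Integrals over a half-line -/

variable {E F : Type*} [NormedAddCommGroup E] [NormedSpace ℝ E] [NormedAddCommGroup F]
  [NormedSpace ℝ F]

theorem lintegral_Ioi_one_rpow {b : ℝ} (hb : 0 < b) :
    ∫⁻ t in Ioi (1 : ℝ), ENNReal.ofReal (t ^ (-1 - b)) = ENNReal.ofReal b⁻¹ := by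
  have hlt : -1 - b < -1 := by linarith
  rw [← ofReal_integral_eq_lintegral_ofReal (integrableOn_Ioi_rpow_of_lt hlt one_pos),
    integral_Ioi_rpow_of_lt hlt one_pos]
  · rw [Real.one_rpow, show -1 - b + 1 = -b by ring, neg_div_neg_eq, one_div]
  · filter_upwards [ae_restrict_mem measurableSet_Ioi] with t ht
    exact Real.rpow_nonneg (zero_le_one.trans (le_of_lt ht)) _

theorem enorm_le_lintegral_Ioi_enorm_deriv {f : ℝ → F} (hf : ContDiff ℝ 1 f)
    (hfc : HasCompactSupport f) (a : ℝ) : ‖f a‖ₑ ≤ ∫⁻ t in Ioi a, ‖deriv f t‖ₑ := by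
  have reflected := HasCompactSupport.enorm_le_lintegral_Ici_deriv (f := fun t ↦ f (-t))
    (by fun_prop) (hfc.comp_homeomorph (Homeomorph.neg ℝ)) (-a)
  simp only [neg_neg, deriv_comp_neg, enorm_neg] at reflected
  have hreflect : ∫⁻ t in Iic (-a), ‖deriv f (-t)‖ₑ = ∫⁻ t in Ici a, ‖deriv f t‖ₑ := by
    simpa using (Measure.measurePreserving_neg volume).setLIntegral_comp_preimage_emb
      (Homeomorph.neg ℝ).measurableEmbedding (fun t ↦ ‖deriv f t‖ₑ) (Ici a)
  rwa [setLIntegral_congr Ioi_ae_eq_Ici, ← hreflect]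

/-! ### The dual Hardy operator -/

/-- The dual Hardy operator `h ↦ ∫₁^∞ h(tx) dt/t`, an average over outward dilations. It dominates
a compactly supported function in terms of its gradient and is bounded on weighted `Lᵖ`. -/
noncomputable def dualHardy (h : E → ENNReal) (x : E) : ENNReal :=
  ∫⁻ t in Ioi (1 : ℝ), ENNReal.ofReal t⁻¹ * h (t • x)

theorem enorm_le_dualHardy {u : E → F} (hu : ContDiff ℝ 1 u) (huc : HasCompactSupport u)
    {x : E} (hx : x ≠ 0) : ‖u x‖ₑ ≤ dualHardy (fun z ↦ ‖fderiv ℝ u z‖ₑ * ‖z‖ₑ) x := by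
  have hderiv (t : ℝ) : deriv (fun r : ℝ ↦ u (r • x)) t = fderiv ℝ u (t • x) x := by
    have hline : HasDerivAt (fun r : ℝ ↦ r • x) x t := by
      simpa using (hasDerivAt_id t).smul_const x
    exact ((hu.differentiable one_ne_zero _).hasFDerivAt.comp_hasDerivAt t hline).deriv
  calc ‖u x‖ₑ
      ≤ ∫⁻ t in Ioi (1 : ℝ), ‖fderiv ℝ u (t • x) x‖ₑ := by
        simpa [hderiv] using enorm_le_lintegral_Ioi_enorm_deriv (f := fun r : ℝ ↦ u (r • x))
          (by fun_prop) (huc.comp_isClosedEmbedding (isClosedEmbedding_smul_left hx)) 1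
    _ ≤ dualHardy (fun z ↦ ‖fderiv ℝ u z‖ₑ * ‖z‖ₑ) x := by
        refine setLIntegral_mono' measurableSet_Ioi fun t ht ↦ ?_
        have ht0 : 0 < t := one_pos.trans ht
        calc ‖fderiv ℝ u (t • x) x‖ₑ ≤ ‖fderiv ℝ u (t • x)‖ₑ * ‖x‖ₑ :=
              ContinuousLinearMap.le_opENorm _ _
          _ = ENNReal.ofReal t⁻¹ * (‖fderiv ℝ u (t • x)‖ₑ * ‖t • x‖ₑ) := by
              rw [enorm_smul, Real.enorm_of_nonneg ht0.le, mul_left_comm,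
                ← mul_assoc (ENNReal.ofReal t⁻¹), ← ENNReal.ofReal_mul (by positivity),
                inv_mul_cancel₀ ht0.ne', ENNReal.ofReal_one, one_mul]

variable [MeasurableSpace E] [BorelSpace E]

theorem dualHardy_rpow_le {p : ℝ} (hp : 1 ≤ p) {b : ℝ} (hb : 0 < b) {h : E → ENNReal}
    (hh : Measurable h) (x : E) :
    dualHardy h x ^ p ≤ ENNReal.ofReal b⁻¹ ^ (p - 1) *
      ∫⁻ t in Ioi (1 : ℝ), ENNReal.ofReal (t ^ (b * p - 1 - b)) * h (t • x) ^ p := by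
  have hp0 : 0 < p := by positivity
  have hsplit : dualHardy h x = ∫⁻ t in Ioi (1 : ℝ),
      ENNReal.ofReal (t ^ (-1 - b)) * (ENNReal.ofReal (t ^ b) * h (t • x)) := by
    refine setLIntegral_congr_fun measurableSet_Ioi fun t ht ↦ ?_
    have ht0 : 0 < t := one_pos.trans ht
    rw [← mul_assoc, ← ENNReal.ofReal_mul (by positivity), ← Real.rpow_add ht0, sub_add_cancel,
      Real.rpow_neg_one]
  have : Measurable fun t : ℝ ↦ h (t • x) := by fun_prop
  rw [hsplit, ← lintegral_Ioi_one_rpow hb]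
  refine (rpow_lintegral_mul_le hp (by fun_prop) (by fun_prop)).trans_eq ?_
  congr 1
  refine setLIntegral_congr_fun measurableSet_Ioi fun t ht ↦ ?_
  have ht0 : 0 < t := one_pos.trans ht
  rw [ENNReal.mul_rpow_of_nonneg _ _ hp0.le, ENNReal.ofReal_rpow_of_pos (by positivity),
    ← Real.rpow_mul ht0.le, ← mul_assoc, ← ENNReal.ofReal_mul (by positivity),
    ← Real.rpow_add ht0]
  ring_nf

variable [FiniteDimensional ℝ E] (ν : Measure E) [ν.IsAddHaarMeasure]

theorem lintegral_enorm_rpow_mul_comp_smul (a : ℝ) {f : E → ENNReal} (hf : Measurable f) {t : ℝ}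
    (ht : 0 < t) : ∫⁻ x, ‖x‖ₑ ^ a * f (t • x) ∂ν =
      ENNReal.ofReal (t ^ (-a - finrank ℝ E)) * ∫⁻ x, ‖x‖ₑ ^ a * f x ∂ν := by
  have hweight (x : E) : ‖x‖ₑ ^ a = ENNReal.ofReal (t ^ (-a)) * ‖t • x‖ₑ ^ a := by
    rw [enorm_smul, Real.enorm_of_nonneg ht.le,
      ENNReal.mul_rpow_of_ne_top ENNReal.ofReal_ne_top enorm_ne_top, ENNReal.ofReal_rpow_of_pos ht,
      ← mul_assoc, ← ENNReal.ofReal_mul (by positivity), ← Real.rpow_add ht, neg_add_cancel,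
      Real.rpow_zero, ENNReal.ofReal_one, one_mul]
  calc ∫⁻ x, ‖x‖ₑ ^ a * f (t • x) ∂ν
      = ENNReal.ofReal (t ^ (-a)) * ∫⁻ x, ‖t • x‖ₑ ^ a * f (t • x) ∂ν := by
        rw [← lintegral_const_mul' _ _ ENNReal.ofReal_ne_top]
        exact lintegral_congr fun x ↦ by rw [hweight x, mul_assoc]
    _ = ENNReal.ofReal (t ^ (-a)) * (ENNReal.ofReal |(t ^ finrank ℝ E)⁻¹| *
          ∫⁻ x, ‖x‖ₑ ^ a * f x ∂ν) := by
        rw [← lintegral_map (μ := ν) (f := fun x ↦ ‖x‖ₑ ^ a * f x) (by fun_prop)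
          (measurable_const_smul t), Measure.map_addHaar_smul ν ht.ne', lintegral_smul_measure,
          smul_eq_mul]
    _ = ENNReal.ofReal (t ^ (-a - finrank ℝ E)) * ∫⁻ x, ‖x‖ₑ ^ a * f x ∂ν := by
        rw [← mul_assoc, ← ENNReal.ofReal_mul (by positivity), abs_of_pos (by positivity),
          sub_eq_add_neg, Real.rpow_add ht, Real.rpow_neg ht.le (finrank ℝ E), Real.rpow_natCast]

theorem lintegral_enorm_rpow_mul_dualHardy_rpow_le {p : ℝ} (hp : 1 ≤ p) {s : ℝ}
    (hs : s < finrank ℝ E) {h : E → ENNReal} (hh : Measurable h) :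
    ∫⁻ x, ‖x‖ₑ ^ (-s) * dualHardy h x ^ p ∂ν ≤
      ENNReal.ofReal (p / (finrank ℝ E - s)) ^ p * ∫⁻ x, ‖x‖ₑ ^ (-s) * h x ^ p ∂ν := by
  have hp0 : 0 < p := by positivity
  obtain ⟨b, hb, hbp⟩ : ∃ b, 0 < b ∧ b * p = finrank ℝ E - s :=
    ⟨_, div_pos (sub_pos.2 hs) hp0, div_mul_cancel₀ _ hp0.ne'⟩
  have hbinv : p / (finrank ℝ E - s) = b⁻¹ := by rw [← hbp]; field_simp
  set B := ENNReal.ofReal b⁻¹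
  set I := ∫⁻ x, ‖x‖ₑ ^ (-s) * h x ^ p ∂ν
  have hB_rpow : B ^ p = B ^ (p - 1) * B := by
    simpa using ENNReal.rpow_add_of_nonneg (x := B) (p - 1) 1 (sub_nonneg.2 hp) zero_le_one
  -- The exponent `b` is the one for which the dilation factor `t ^ (b * p)` cancels against
  -- the Jacobian and the weight.
  have hdilate {t : ℝ} (ht : 0 < t) :
      ∫⁻ x, ENNReal.ofReal (t ^ (b * p - 1 - b)) * (‖x‖ₑ ^ (-s) * h (t • x) ^ p) ∂ν =
        ENNReal.ofReal (t ^ (-1 - b)) * I := by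
    rw [lintegral_const_mul' _ _ ENNReal.ofReal_ne_top,
      lintegral_enorm_rpow_mul_comp_smul ν (-s) (hh.pow_const p) ht, ← mul_assoc,
      ← ENNReal.ofReal_mul (by positivity), ← Real.rpow_add ht]
    congr 3
    linarith
  calc ∫⁻ x, ‖x‖ₑ ^ (-s) * dualHardy h x ^ p ∂ν
      ≤ ∫⁻ x, B ^ (p - 1) * (∫⁻ t in Ioi (1 : ℝ),
          ENNReal.ofReal (t ^ (b * p - 1 - b)) * (‖x‖ₑ ^ (-s) * h (t • x) ^ p)) ∂ν := by
        refine lintegral_mono fun x ↦ ?_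
        have : Measurable fun t : ℝ ↦ h (t • x) := by fun_prop
        simp only [mul_left_comm _ (‖x‖ₑ ^ (-s))]
        rw [lintegral_const_mul _ (by fun_prop), mul_left_comm]
        gcongr
        exact dualHardy_rpow_le hp hb hh x
    _ = B ^ (p - 1) * ∫⁻ t in Ioi (1 : ℝ), ∫⁻ x,
          ENNReal.ofReal (t ^ (b * p - 1 - b)) * (‖x‖ₑ ^ (-s) * h (t • x) ^ p) ∂ν := by
        rw [lintegral_const_mul' _ _ (by finiteness), lintegral_lintegral_swap (by fun_prop)]
    _ = B ^ (p - 1) * (B * I) := by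
        rw [setLIntegral_congr_fun measurableSet_Ioi fun t ht ↦ hdilate (one_pos.trans ht),
          lintegral_mul_const _ (by fun_prop), lintegral_Ioi_one_rpow hb]
    _ = ENNReal.ofReal (p / (finrank ℝ E - s)) ^ p * I := by
        rw [hbinv, hB_rpow, mul_assoc]

/-! ### Hardy inequalities -/

section Hardy

variable {ν} {G : Type*} [NormedAddCommGroup G] [NormedSpace ℝ G] {u : E → F} {v : E → G} {p q : ℝ}

theorem lintegral_weighted_hardy [Nontrivial E] (hu : ContDiff ℝ 1 u) (huc : HasCompactSupport u)
    (hp : 1 ≤ p) {s : ℝ} (hs : s < finrank ℝ E) :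
    ∫⁻ x, ‖u x‖ₑ ^ p * ‖x‖ₑ ^ (-s) ∂ν ≤ ENNReal.ofReal (p / (finrank ℝ E - s)) ^ p *
      ∫⁻ x, ‖fderiv ℝ u x‖ₑ ^ p * ‖x‖ₑ ^ (p - s) ∂ν := by
  have hp0 : 0 ≤ p := by positivity
  have hDu : Measurable fun x ↦ ‖fderiv ℝ u x‖ₑ :=
    (hu.continuous_fderiv one_ne_zero).enorm.measurable
  calc ∫⁻ x, ‖u x‖ₑ ^ p * ‖x‖ₑ ^ (-s) ∂ν
      ≤ ∫⁻ x, ‖x‖ₑ ^ (-s) * dualHardy (fun z ↦ ‖fderiv ℝ u z‖ₑ * ‖z‖ₑ) x ^ p ∂ν := by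
        refine lintegral_mono_ae ?_
        filter_upwards [ν.ae_ne 0] with x hx
        rw [mul_comm]
        gcongr
        exact enorm_le_dualHardy hu huc hx
    _ ≤ ENNReal.ofReal (p / (finrank ℝ E - s)) ^ p *
          ∫⁻ x, ‖x‖ₑ ^ (-s) * (‖fderiv ℝ u x‖ₑ * ‖x‖ₑ) ^ p ∂ν :=
        lintegral_enorm_rpow_mul_dualHardy_rpow_le ν hp hs (hDu.mul measurable_enorm)
    _ = ENNReal.ofReal (p / (finrank ℝ E - s)) ^ p *
          ∫⁻ x, ‖fderiv ℝ u x‖ₑ ^ p * ‖x‖ₑ ^ (p - s) ∂ν := by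
        congr 1
        refine lintegral_congr_ae ?_
        filter_upwards [ν.ae_ne 0] with x hx
        rw [ENNReal.mul_rpow_of_nonneg _ _ hp0, sub_eq_add_neg,
          ENNReal.rpow_add _ _ (enorm_ne_zero.2 hx) enorm_ne_top]
        ring

theorem lintegral_weighted_hardy_sub [Nontrivial E] (hu : ContDiff ℝ 1 u)
    (huc : HasCompactSupport u) (hp : 1 ≤ p) {s : ℝ} (hs : s < finrank ℝ E) (c : E) :
    ∫⁻ x, ‖u x‖ₑ ^ p * ‖x - c‖ₑ ^ (-s) ∂ν ≤ ENNReal.ofReal (p / (finrank ℝ E - s)) ^ p *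
      ∫⁻ x, ‖fderiv ℝ u x‖ₑ ^ p * ‖x - c‖ₑ ^ (p - s) ∂ν := by
  have centred := lintegral_weighted_hardy (ν := ν) (u := fun z ↦ u (z + c)) (by fun_prop)
    (huc.comp_homeomorph (Homeomorph.addRight c)) hp hs
  rw [← lintegral_add_right_eq_self (fun x ↦ ‖u x‖ₑ ^ p * ‖x - c‖ₑ ^ (-s)) c,
    ← lintegral_add_right_eq_self (fun x ↦ ‖fderiv ℝ u x‖ₑ ^ p * ‖x - c‖ₑ ^ (p - s)) c]
  simpa [fderiv_comp_add_right] using centred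

theorem lintegral_hardy_sub [Nontrivial E] (hu : ContDiff ℝ 1 u) (huc : HasCompactSupport u)
    (hp : 1 ≤ p) (hpd : p < finrank ℝ E) (c : E) :
    ∫⁻ x, ‖u x‖ₑ ^ p * ‖x - c‖ₑ ^ (-p) ∂ν ≤
      ENNReal.ofReal (p / (finrank ℝ E - p)) ^ p * ∫⁻ x, ‖fderiv ℝ u x‖ₑ ^ p ∂ν := by
  simpa using lintegral_weighted_hardy_sub (ν := ν) hu huc hp hpd c

-- Hardy's inequality for `v` centred at `x` trades `|x - y| ^ (-(p + q))` for `|x - y| ^ (-p)`,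
-- which Hardy's inequality for `u` centred at `y` then absorbs.
theorem lintegral_lintegral_mul_enorm_sub_rpow_le [Nontrivial E] (hu : ContDiff ℝ 1 u)
    (huc : HasCompactSupport u) (hv : ContDiff ℝ 1 v) (hvc : HasCompactSupport v)
    (hp : 1 ≤ p) (hq : 1 ≤ q) (hpq : p + q < finrank ℝ E) :
    ∫⁻ x, ∫⁻ y, ‖u x‖ₑ ^ p * (‖v y‖ₑ ^ q * ‖y - x‖ₑ ^ (-(p + q))) ∂ν ∂ν ≤
      ENNReal.ofReal (q / (finrank ℝ E - (p + q))) ^ q *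
        (ENNReal.ofReal (p / (finrank ℝ E - p)) ^ p *
          (∫⁻ x, ‖fderiv ℝ u x‖ₑ ^ p ∂ν) * ∫⁻ y, ‖fderiv ℝ v y‖ₑ ^ q ∂ν) := by
  have : Measurable fun x ↦ ‖u x‖ₑ := hu.continuous.enorm.measurable
  have : Measurable fun y ↦ ‖fderiv ℝ v y‖ₑ :=
    (hv.continuous_fderiv one_ne_zero).enorm.measurable
  have hu_top (x : E) : ‖u x‖ₑ ^ p ≠ ⊤ := by finiteness
  have hDv_top (y : E) : ‖fderiv ℝ v y‖ₑ ^ q ≠ ⊤ := by finiteness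
  set Kq := ENNReal.ofReal (q / (finrank ℝ E - (p + q))) ^ q
  set Kp := ENNReal.ofReal (p / (finrank ℝ E - p)) ^ p
  set A := ∫⁻ x, ‖fderiv ℝ u x‖ₑ ^ p ∂ν
  calc ∫⁻ x, ∫⁻ y, ‖u x‖ₑ ^ p * (‖v y‖ₑ ^ q * ‖y - x‖ₑ ^ (-(p + q))) ∂ν ∂ν
      ≤ ∫⁻ x, Kq * ∫⁻ y, ‖u x‖ₑ ^ p * (‖fderiv ℝ v y‖ₑ ^ q * ‖y - x‖ₑ ^ (-p)) ∂ν ∂ν := by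
        refine lintegral_mono fun x ↦ ?_
        have hardy_v := lintegral_weighted_hardy_sub (ν := ν) hv hvc hq hpq x
        rw [show q - (p + q) = -p by ring] at hardy_v
        rw [lintegral_const_mul' _ _ (hu_top x), lintegral_const_mul' _ _ (hu_top x),
          mul_left_comm]
        gcongr
    _ = Kq * ∫⁻ y, ∫⁻ x, ‖u x‖ₑ ^ p * (‖fderiv ℝ v y‖ₑ ^ q * ‖y - x‖ₑ ^ (-p)) ∂ν ∂ν := by
        rw [lintegral_const_mul' _ _ (by finiteness), lintegral_lintegral_swap (by fun_prop)]
    _ ≤ Kq * ∫⁻ y, Kp * A * ‖fderiv ℝ v y‖ₑ ^ q ∂ν := by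
        gcongr with y
        have hardy_u := lintegral_hardy_sub (ν := ν) hu huc hp (by linarith) y
        simp only [enorm_sub_rev y, mul_left_comm _ (‖fderiv ℝ v y‖ₑ ^ q)]
        rw [lintegral_const_mul' _ _ (hDv_top y), mul_comm (Kp * A)]
        gcongr
    _ = Kq * (Kp * A * ∫⁻ y, ‖fderiv ℝ v y‖ₑ ^ q ∂ν) := by
        rw [lintegral_const_mul _ (by fun_prop)]

theorem integral_hardy [Nontrivial E] (hu : ContDiff ℝ 1 u) (huc : HasCompactSupport u)
    (hp : 1 ≤ p) (hpd : p < finrank ℝ E) :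
    ∫ x, ‖u x‖ ^ p / ‖x‖ ^ p ∂ν ≤
      (p / (finrank ℝ E - p)) ^ p * ∫ x, ‖fderiv ℝ u x‖ ^ p ∂ν := by
  have hp0 : 0 < p := by positivity
  have hbase : 0 ≤ p / (finrank ℝ E - p) := div_nonneg hp0.le (sub_nonneg.2 hpd.le)
  have hmeas : AEStronglyMeasurable (fun x ↦ ‖u x‖ ^ p / ‖x‖ ^ p) ν := by
    have hu_meas : Measurable fun x ↦ ‖u x‖ := hu.continuous.norm.measurable
    exact ((hu_meas.pow_const p).div (measurable_norm.pow_const p)).aestronglyMeasurable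
  rw [integral_eq_lintegral_of_nonneg_ae (.of_forall fun x ↦ by positivity) hmeas]
  refine ENNReal.toReal_le_of_le_ofReal (by positivity) ?_
  calc ∫⁻ x, ENNReal.ofReal (‖u x‖ ^ p / ‖x‖ ^ p) ∂ν
      ≤ ∫⁻ x, ‖u x‖ₑ ^ p * ‖x - 0‖ₑ ^ (-p) ∂ν := by
        refine lintegral_mono fun x ↦ ?_
        simpa [ofReal_norm_rpow hp0.le] using ofReal_div_norm_rpow_le (‖u x‖ ^ p) p x
    _ ≤ ENNReal.ofReal (p / (finrank ℝ E - p)) ^ p * ∫⁻ x, ‖fderiv ℝ u x‖ₑ ^ p ∂ν :=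
        lintegral_hardy_sub hu huc hp hpd 0
    _ = ENNReal.ofReal ((p / (finrank ℝ E - p)) ^ p * ∫ x, ‖fderiv ℝ u x‖ ^ p ∂ν) := by
        rw [lintegral_enorm_rpow_eq_ofReal_integral
            (hu.continuous_fderiv one_ne_zero) (huc.fderiv ℝ) hp0,
          ENNReal.ofReal_rpow_of_nonneg hbase hp0.le,
          ENNReal.ofReal_mul (by positivity)]

theorem lintegral_lintegral_ofReal_mul_div_norm_sub_rpow_le [Nontrivial E] (hu : ContDiff ℝ 1 u)
    (huc : HasCompactSupport u) (hv : ContDiff ℝ 1 v) (hvc : HasCompactSupport v)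
    (hp : 1 ≤ p) (hq : 1 ≤ q) (hpq : p + q < finrank ℝ E) :
    ∫⁻ x, ∫⁻ y, ENNReal.ofReal (‖u x‖ ^ p * ‖v y‖ ^ q / ‖x - y‖ ^ (p + q)) ∂ν ∂ν ≤
      ENNReal.ofReal ((q / (finrank ℝ E - (p + q))) ^ q * ((p / (finrank ℝ E - p)) ^ p *
        (∫ x, ‖fderiv ℝ u x‖ ^ p ∂ν) * ∫ y, ‖fderiv ℝ v y‖ ^ q ∂ν)) := by
  have hp0 : 0 < p := by positivity
  have hq0 : 0 < q := by positivity
  have hbase_q : 0 ≤ q / (finrank ℝ E - (p + q)) := div_nonneg hq0.le (sub_nonneg.2 hpq.le)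
  have hbase_p : 0 ≤ p / (finrank ℝ E - p) := div_nonneg hp0.le (by linarith)
  calc ∫⁻ x, ∫⁻ y, ENNReal.ofReal (‖u x‖ ^ p * ‖v y‖ ^ q / ‖x - y‖ ^ (p + q)) ∂ν ∂ν
      ≤ ∫⁻ x, ∫⁻ y, ‖u x‖ₑ ^ p * (‖v y‖ₑ ^ q * ‖y - x‖ₑ ^ (-(p + q))) ∂ν ∂ν := by
        refine lintegral_mono fun x ↦ lintegral_mono fun y ↦ ?_
        refine (ofReal_div_norm_rpow_le _ _ _).trans_eq ?_
        rw [ENNReal.ofReal_mul (by positivity), ofReal_norm_rpow hp0.le, ofReal_norm_rpow hq0.le,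
          enorm_sub_rev, mul_assoc]
    _ ≤ _ := lintegral_lintegral_mul_enorm_sub_rpow_le hu huc hv hvc hp hq hpq
    _ = _ := by
        rw [lintegral_enorm_rpow_eq_ofReal_integral
            (hu.continuous_fderiv one_ne_zero) (huc.fderiv ℝ) hp0,
          lintegral_enorm_rpow_eq_ofReal_integral
            (hv.continuous_fderiv one_ne_zero) (hvc.fderiv ℝ) hq0,
          ENNReal.ofReal_rpow_of_nonneg hbase_q hq0.le,
          ENNReal.ofReal_rpow_of_nonneg hbase_p hp0.le,
          ← ENNReal.ofReal_mul (by positivity), ← ENNReal.ofReal_mul (by positivity),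
          ← ENNReal.ofReal_mul (by positivity)]

end Hardy

theorem exists_pos_mul_integral_le_sub [Nontrivial E] {p μ : ℝ} (hp : 1 ≤ p)
    (hpd : p < finrank ℝ E) (hμ : μ < ((finrank ℝ E - p) / p) ^ p) :
    ∃ δ : ℝ, 0 < δ ∧ ∀ u : E → F, ContDiff ℝ 1 u → HasCompactSupport u →
      δ * ∫ x, ‖fderiv ℝ u x‖ ^ p ∂ν ≤
        (∫ x, ‖fderiv ℝ u x‖ ^ p ∂ν) - μ * ∫ x, ‖u x‖ ^ p / ‖x‖ ^ p ∂ν := by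
  have hp0 : 0 < p := by positivity
  have hb : 0 < (finrank ℝ E - p) / p := div_pos (sub_pos.2 hpd) hp0
  set K := (p / (finrank ℝ E - p)) ^ p with hK
  have hK_inv : ((finrank ℝ E - p) / p) ^ p = K⁻¹ := by
    rw [hK, ← Real.inv_rpow (by rw [← inv_div]; positivity), inv_div]
  have hK0 : 0 < K := inv_pos.1 (hK_inv ▸ Real.rpow_pos_of_pos hb p)
  have hmax : max μ 0 < K⁻¹ := max_lt (hK_inv ▸ hμ) (inv_pos.2 hK0)
  refine ⟨1 - max μ 0 * K, sub_pos.2 ((lt_div_iff₀ hK0).1 (by rwa [one_div])), fun u hu huc ↦ ?_⟩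
  have hH0 : 0 ≤ ∫ x, ‖u x‖ ^ p / ‖x‖ ^ p ∂ν := integral_nonneg fun x ↦ by positivity
  have hHardy : μ * ∫ x, ‖u x‖ ^ p / ‖x‖ ^ p ∂ν ≤
      max μ 0 * (K * ∫ x, ‖fderiv ℝ u x‖ ^ p ∂ν) :=
    mul_le_mul (le_max_left μ 0) (integral_hardy hu huc hp hpd) hH0 (le_max_right μ 0)
  linarith

theorem exists_pos_lintegral_lintegral_rpow_le_integral_fderiv {p : ℝ} (hp : 1 ≤ p)
    (hpd : p < (finrank ℝ E : ℝ) / 2) :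
    ∃ C : ℝ, 0 < C ∧ ∀ u : E → F, ContDiff ℝ 1 u → HasCompactSupport u →
      (∫⁻ x, ∫⁻ y, ENNReal.ofReal (‖u x‖ ^ p * ‖u y‖ ^ p / ‖x - y‖ ^ (2 * p)) ∂ν ∂ν) ^
          (1 / (2 * p)) ≤
        ENNReal.ofReal (C * (∫ x, ‖fderiv ℝ u x‖ ^ p ∂ν) ^ (1 / p)) := by
  have hp0 : 0 < p := by positivity
  have : Nontrivial E := nontrivial_of_finrank_pos (R := ℝ) (by rify; linarith)
  have hbase₁ : 0 < p / (finrank ℝ E - 2 * p) := div_pos hp0 (by linarith)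
  have hbase₂ : 0 < p / (finrank ℝ E - p) := div_pos hp0 (by linarith)
  set K := (p / (finrank ℝ E - 2 * p)) ^ p * (p / (finrank ℝ E - p)) ^ p with hK
  refine ⟨√K ^ (1 / p), by positivity, fun u hu huc ↦ ?_⟩
  have hdouble := lintegral_lintegral_ofReal_mul_div_norm_sub_rpow_le (ν := ν)
    hu huc hu huc hp hp (by linarith)
  have hA : 0 ≤ ∫ x, ‖fderiv ℝ u x‖ ^ p ∂ν := integral_nonneg fun x ↦ by positivity
  set A := ∫ x, ‖fderiv ℝ u x‖ ^ p ∂ν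
  rw [← two_mul p, mul_assoc _ A A, ← mul_assoc, ← hK] at hdouble
  calc (∫⁻ x, ∫⁻ y, ENNReal.ofReal (‖u x‖ ^ p * ‖u y‖ ^ p / ‖x - y‖ ^ (2 * p)) ∂ν ∂ν) ^
        (1 / (2 * p))
      ≤ (ENNReal.ofReal (√K * A) ^ 2) ^ (1 / (2 * p)) := by
        gcongr
        rwa [← ENNReal.ofReal_pow (by positivity), mul_pow, Real.sq_sqrt (by positivity), sq A]
    _ = ENNReal.ofReal (√K * A) ^ (1 / p) := by
        rw [← ENNReal.rpow_natCast, ← ENNReal.rpow_mul]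
        congr 1
        field_simp
        norm_num
    _ = ENNReal.ofReal (√K ^ (1 / p) * A ^ (1 / p)) := by
        rw [ENNReal.ofReal_rpow_of_nonneg (by positivity) (by positivity),
          Real.mul_rpow (by positivity) hA]

theorem stmt_15_general {p μ : ℝ} (hp : 1 ≤ p) (hpd : p < (finrank ℝ E : ℝ) / 2)
    (hμ : μ < ((finrank ℝ E - p) / p) ^ p) :
    ∃ C : ℝ, 0 < C ∧ ∀ u : E → F, ContDiff ℝ 1 u → HasCompactSupport u →
      (∫⁻ x, ∫⁻ y, ENNReal.ofReal (‖u x‖ ^ p * ‖u y‖ ^ p / ‖x - y‖ ^ (2 * p)) ∂ν ∂ν) ^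
          (1 / (2 * p)) ≤
        ENNReal.ofReal (C * ((∫ x, ‖fderiv ℝ u x‖ ^ p ∂ν) -
          μ * ∫ x, ‖u x‖ ^ p / ‖x‖ ^ p ∂ν) ^ (1 / p)) := by
  have : Nontrivial E := nontrivial_of_finrank_pos (R := ℝ) (by rify; linarith)
  obtain ⟨C, hC, hdouble⟩ :=
    exists_pos_lintegral_lintegral_rpow_le_integral_fderiv (F := F) ν hp hpd
  obtain ⟨δ, hδ, hcoercive⟩ := exists_pos_mul_integral_le_sub (F := F) ν hp (by linarith) hμ
  refine ⟨C * δ⁻¹ ^ (1 / p), by positivity, fun u hu huc ↦ (hdouble u hu huc).trans ?_⟩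
  have hcoercive_u := hcoercive u hu huc
  have hA : 0 ≤ ∫ x, ‖fderiv ℝ u x‖ ^ p ∂ν := integral_nonneg fun x ↦ by positivity
  have hQ := (mul_nonneg hδ.le hA).trans hcoercive_u
  rw [mul_assoc, ← Real.mul_rpow (inv_nonneg.2 hδ.le) hQ]
  gcongr
  rwa [le_inv_mul_iff₀ hδ]

/-- Inequality (1.5): the doubly critical Hartree–Hardy embedding
`(∬ |u(x)|^p|u(y)|^p / |x-y|^{2p})^{1/(2p)} ≤ C (∫ |∇u|^p - μ ∫ |u|^p/|x|^p)^{1/p}`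
for smooth compactly supported `u`, where `0 ≤ μ < ((N-p)/p)^p`. -/
theorem stmt_15 (N : ℕ) (hN : 3 ≤ N) (p μ : ℝ) (hp1 : 1 < p) (hpN : p < (N : ℝ) / 2)
    (hμ0 : 0 ≤ μ) (hμ : μ < (((N : ℝ) - p) / p) ^ p) :
    ∃ C : ℝ, 0 < C ∧ ∀ u : EuclideanSpace ℝ (Fin N) → ℝ,
      ContDiff ℝ (⊤ : ℕ∞) u → HasCompactSupport u →
      (∫⁻ x, ∫⁻ y, ENNReal.ofReal (|u x| ^ p * |u y| ^ p / ‖x - y‖ ^ (2 * p))) ^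
          (1 / (2 * p)) ≤
        ENNReal.ofReal (C *
          ((∫ x, ‖fderiv ℝ u x‖ ^ p) - μ * ∫ x, |u x| ^ p / ‖x‖ ^ p) ^ (1 / p)) := by
  obtain ⟨C, hC, hembed⟩ := stmt_15_general (E := EuclideanSpace ℝ (Fin N)) (F := ℝ) volume hp1.le
    (by simpa using hpN) (by simpa using hμ)
  exact ⟨C, hC, fun u hu ↦ hembed u (hu.of_le (by exact_mod_cast le_top))⟩
end

section
/- Let N ≥ 2, 1 < p < N, 0 ≤ s < p, s < σ < N, 0 < σ + s ≤ 2p, and set p_{s,σ} := (2N−σ−s)p/(2(N−p)). There exists a constant C = C(N,p,s,σ) > 0 such that for every smooth compactly supported function u : ℝ^N → ℝ one has (∬_{ℝ^N×ℝ^N} |u(x)|^{p_{s,σ}} |u(y)|^{p_{s,σ}} / (|x|^{s} |x−y|^{σ}) dx dy)^{1/(2p_{s,σ})} ≤ C · (∫_{ℝ^N} |∇u|^p dx)^{1/p}. -/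
open MeasureTheory

open Metric Module Set
open scoped ENNReal NNReal

/-!
Integrating `|x|^{-s} |x - y|^{-σ}` first in `y` and then in `x` bounds its integral over `A × B` by
`|A|^{1 - s/N} |B|^{1 - σ/N}`. Up to a constant the kernel is at most the one with both exponents
equal to `(s + σ)/2`, or else the smaller of itself and its transpose, and the geometric mean of
their two bounds is symmetric in `A` and `B`; so `(|A| |B|)^{1 - (s + σ)/(2N)}` is a bound as well.

Following Maz'ya, the Sobolev inequality applied to a truncation of `u` bounds
`λ |{|u| ≥ 2λ}|^{1/p - 1/N}` by the `L^p` norm of `∇u` on `{λ < |u| < 2λ}` alone. Decomposing `|u|`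
dyadically in both variables reduces the double integral to a sum over disjoint shells, which
can be added up because `p ≤ p_{s,σ}`.
-/

lemma ennreal_rpow_neg_anti {x y : ℝ≥0∞} {z : ℝ} (hz : 0 ≤ z) (hxy : x ≤ y) :
    y ^ (-z) ≤ x ^ (-z) := by
  simpa only [ENNReal.rpow_neg, ENNReal.inv_le_inv] using ENNReal.rpow_le_rpow hxy hz

lemma ennreal_rpow_neg_add {x : ℝ≥0∞} (hx : x ≠ ∞) {y z : ℝ} (hy : 0 ≤ y) (hz : 0 ≤ z) :
    x ^ (-(y + z)) = x ^ (-y) * x ^ (-z) := by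
  rw [ENNReal.rpow_neg, ENNReal.rpow_add_of_nonneg _ _ hy hz, ENNReal.mul_inv, ENNReal.rpow_neg,
    ENNReal.rpow_neg]
  exacts [.inr (ENNReal.rpow_ne_top_of_nonneg hz hx), .inl (ENNReal.rpow_ne_top_of_nonneg hy hx)]

lemma le_rpow_half_mul_rpow_half {x y z : ℝ≥0∞} (hx : z ≤ x) (hy : z ≤ y) :
    z ≤ x ^ (1 / 2 : ℝ) * y ^ (1 / 2 : ℝ) := calc
  z = z ^ (1 / 2 : ℝ) * z ^ (1 / 2 : ℝ) := by
    rw [← ENNReal.rpow_add_of_nonneg _ _ (by norm_num) (by norm_num), add_halves, ENNReal.rpow_one]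
  _ ≤ x ^ (1 / 2 : ℝ) * y ^ (1 / 2 : ℝ) := by gcongr

section Potential

variable {E : Type*} [NormedAddCommGroup E] [MeasurableSpace E] (μ : Measure E)

lemma setLIntegral_sdiff_ball_enorm_sub_rpow_neg_le {σ : ℝ} (hσ : 0 ≤ σ) (A : Set E) (a : E)
    (R : ℝ) : ∫⁻ x in A \ ball a R, ‖x - a‖ₑ ^ (-σ) ∂μ ≤ ENNReal.ofReal R ^ (-σ) * μ A := calc
  _ ≤ ∫⁻ _ in A \ ball a R, ENNReal.ofReal R ^ (-σ) ∂μ := by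
    refine setLIntegral_mono measurable_const fun x hx ↦ ennreal_rpow_neg_anti hσ ?_
    rw [← ofReal_norm, ← dist_eq_norm]
    exact ENNReal.ofReal_le_ofReal (not_lt.1 hx.2)
  _ ≤ ENNReal.ofReal R ^ (-σ) * μ A := by
    rw [setLIntegral_const]
    gcongr
    exact sdiff_subset

variable [BorelSpace E]

lemma setLIntegral_ball_enorm_sub_rpow_neg [μ.IsAddRightInvariant] (a : E) (R σ : ℝ) :
    ∫⁻ x in ball a R, ‖x - a‖ₑ ^ (-σ) ∂μ = ∫⁻ x in ball (0 : E) R, ‖x‖ₑ ^ (-σ) ∂μ := by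
  rw [← lintegral_indicator measurableSet_ball, ← lintegral_indicator measurableSet_ball,
    ← lintegral_sub_right_eq_self ((ball (0 : E) R).indicator _) a]
  simp only [indicator, mem_ball, dist_eq_norm, sub_zero]

variable [NormedSpace ℝ E] [FiniteDimensional ℝ E] [μ.IsAddHaarMeasure]

lemma lintegral_comp_smul_addHaar (f : E → ℝ≥0∞) {r : ℝ} (hr : r ≠ 0) :
    ∫⁻ x, f (r • x) ∂μ = ENNReal.ofReal |(r ^ finrank ℝ E)⁻¹| * ∫⁻ x, f x ∂μ := by
  rw [← (measurableEmbedding_const_smul₀ hr).lintegral_map f, Measure.map_addHaar_smul μ hr,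
    lintegral_smul_measure, smul_eq_mul]

lemma setLIntegral_ball_enorm_rpow_neg {R : ℝ} (hR : 0 < R) (σ : ℝ) :
    ∫⁻ x in ball (0 : E) R, ‖x‖ₑ ^ (-σ) ∂μ =
      ENNReal.ofReal R ^ (finrank ℝ E - σ) * ∫⁻ x in ball (0 : E) 1, ‖x‖ₑ ^ (-σ) ∂μ := by
  have hR0 : ENNReal.ofReal R ≠ 0 := by simpa using hR
  have scaled (x : E) : (ball (0 : E) R).indicator (fun x ↦ ‖x‖ₑ ^ (-σ)) (R • x) =
      ENNReal.ofReal R ^ (-σ) * (ball (0 : E) 1).indicator (fun x ↦ ‖x‖ₑ ^ (-σ)) x := by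
    have hmem : R • x ∈ ball (0 : E) R ↔ x ∈ ball (0 : E) 1 := by
      simp [norm_smul, abs_of_pos hR, hR]
    by_cases hx : x ∈ ball (0 : E) 1
    · rw [indicator_of_mem (hmem.2 hx), indicator_of_mem hx, enorm_smul,
        Real.enorm_of_nonneg hR.le, ENNReal.mul_rpow_of_ne_top ENNReal.ofReal_ne_top enorm_ne_top]
    · rw [indicator_of_notMem (hmem.not.2 hx), indicator_of_notMem hx, mul_zero]
  have key := lintegral_comp_smul_addHaar μ ((ball (0 : E) R).indicator fun x ↦ ‖x‖ₑ ^ (-σ)) hR.ne'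
  simp only [scaled] at key
  rw [lintegral_const_mul' _ _ (by simp [hR]), lintegral_indicator measurableSet_ball,
    lintegral_indicator measurableSet_ball, abs_of_pos (by positivity),
    ENNReal.ofReal_inv_of_pos (by positivity), ENNReal.ofReal_pow hR.le] at key
  rw [sub_eq_add_neg, ENNReal.rpow_add _ _ hR0 ENNReal.ofReal_ne_top, ENNReal.rpow_natCast,
    mul_assoc, key, ENNReal.mul_inv_cancel_left (by simp [hR]) (by simp)]

lemma setLIntegral_unitBall_enorm_rpow_neg_lt_top [Nontrivial E] {σ : ℝ} (hσ : σ < finrank ℝ E) :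
    ∫⁻ x in ball (0 : E) 1, ‖x‖ₑ ^ (-σ) ∂μ < ∞ := by
  have integrable : IntegrableOn (fun x : E ↦ ‖x‖ ^ (-σ)) (ball 0 1) μ :=
    integrableOn_ball_of_norm_le_rpow (C := 1) finrank_pos hσ
      (.of_forall fun x ↦ by rw [Real.norm_of_nonneg (by positivity), one_mul])
      (by fun_prop : Measurable fun x : E ↦ ‖x‖ ^ (-σ)).aestronglyMeasurable
  refine (lintegral_congr_ae ?_).trans_lt integrable.hasFiniteIntegral
  filter_upwards [ae_restrict_of_ae (Measure.ae_ne μ 0)] with x hx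
  rw [Real.enorm_of_nonneg (by positivity), ← ENNReal.ofReal_rpow_of_pos (norm_pos_iff.2 hx),
    ofReal_norm]

-- Splitting at the ball whose radius is `μ A ^ (1 / n)` balances the two contributions.
lemma exists_setLIntegral_enorm_sub_rpow_neg_le [Nontrivial E] {σ : ℝ} (hσ0 : 0 ≤ σ)
    (hσ : σ < finrank ℝ E) :
    ∃ C : ℝ≥0, ∀ (A : Set E) (a : E),
      ∫⁻ x in A, ‖x - a‖ₑ ^ (-σ) ∂μ ≤ C * μ A ^ (1 - σ / finrank ℝ E) := by
  set n := (finrank ℝ E : ℝ)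
  have hn : 0 < n := Nat.cast_pos.2 (finrank_pos (R := ℝ) (M := E))
  have hfin := setLIntegral_unitBall_enorm_rpow_neg_lt_top μ hσ
  refine ⟨(∫⁻ x in ball (0 : E) 1, ‖x‖ₑ ^ (-σ) ∂μ).toNNReal + 1, fun A a ↦ ?_⟩
  rw [ENNReal.coe_add, ENNReal.coe_toNNReal hfin.ne, ENNReal.coe_one]
  rcases eq_or_ne (μ A) 0 with hA0 | hA0
  · simp [setLIntegral_measure_zero _ _ hA0]
  rcases eq_or_ne (μ A) ∞ with hA | hA
  · have : 0 < 1 - σ / n := by rwa [sub_pos, div_lt_one hn]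
    simp [hA, this]
  set R : ℝ := (μ A ^ n⁻¹).toReal
  have hR_eq : ENNReal.ofReal R = μ A ^ n⁻¹ :=
    ENNReal.ofReal_toReal (ENNReal.rpow_ne_top_of_nonneg (by positivity) hA)
  have hR : 0 < R := ENNReal.ofReal_pos.1 (hR_eq ▸ ENNReal.rpow_pos hA0.bot_lt hA)
  have near : ∫⁻ x in ball a R, ‖x - a‖ₑ ^ (-σ) ∂μ =
      (∫⁻ x in ball (0 : E) 1, ‖x‖ₑ ^ (-σ) ∂μ) * μ A ^ (1 - σ / n) := by
    rw [setLIntegral_ball_enorm_sub_rpow_neg, setLIntegral_ball_enorm_rpow_neg μ hR, hR_eq,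
      ← ENNReal.rpow_mul, mul_comm]
    congr 2
    field_simp
    rfl
  have far : ∫⁻ x in A \ ball a R, ‖x - a‖ₑ ^ (-σ) ∂μ ≤ 1 * μ A ^ (1 - σ / n) := calc
    _ ≤ ENNReal.ofReal R ^ (-σ) * μ A := setLIntegral_sdiff_ball_enorm_sub_rpow_neg_le μ hσ0 A a R
    _ = 1 * μ A ^ (1 - σ / n) := by
      rw [hR_eq, ← ENNReal.rpow_mul, one_mul, sub_eq_neg_add, ENNReal.rpow_add _ _ hA0 hA,
        ENNReal.rpow_one]
      congr 2
      ring
  calc ∫⁻ x in A, ‖x - a‖ₑ ^ (-σ) ∂μ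
      ≤ ∫⁻ x in ball a R ∪ A \ ball a R, ‖x - a‖ₑ ^ (-σ) ∂μ :=
        lintegral_mono_set (union_sdiff_self.symm ▸ subset_union_right)
    _ ≤ _ := lintegral_union_le _ _ _
    _ ≤ _ := by rw [add_mul]; exact add_le_add near.le far

end Potential

section SteinWeiss

variable {E : Type*} [NormedAddCommGroup E]

/-- The Stein–Weiss kernel `|x|^(-s) |x - y|^(-σ)`, valued in `[0, ∞]` so that it is infinite,
rather than zero, on its singular set. -/
noncomputable def steinWeissKernel (s σ : ℝ) (x y : E) : ℝ≥0∞ :=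
  ‖x‖ₑ ^ (-s) * ‖x - y‖ₑ ^ (-σ)

lemma measurable_steinWeissKernel [MeasurableSpace E] [BorelSpace E] [SecondCountableTopology E]
    (s σ : ℝ) : Measurable (Function.uncurry (steinWeissKernel (E := E) s σ)) := by
  unfold steinWeissKernel Function.uncurry
  fun_prop

lemma steinWeissKernel_le_of_enorm_le {s σ : ℝ} (hs : 0 ≤ s) (hsσ : s ≤ σ) {x y : E}
    (h : ‖x‖ₑ ≤ ‖x - y‖ₑ) :
    steinWeissKernel s σ x y ≤ steinWeissKernel ((s + σ) / 2) ((s + σ) / 2) x y := by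
  have hgap : 0 ≤ (σ - s) / 2 := by linarith
  calc ‖x‖ₑ ^ (-s) * ‖x - y‖ₑ ^ (-σ)
      = ‖x‖ₑ ^ (-s) * (‖x - y‖ₑ ^ (-((s + σ) / 2)) * ‖x - y‖ₑ ^ (-((σ - s) / 2))) := by
        rw [← ennreal_rpow_neg_add enorm_ne_top (by linarith) hgap]
        ring_nf
    _ ≤ ‖x‖ₑ ^ (-s) * (‖x - y‖ₑ ^ (-((s + σ) / 2)) * ‖x‖ₑ ^ (-((σ - s) / 2))) := by
        gcongr _ * (_ * ?_)
        exact ennreal_rpow_neg_anti hgap h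
    _ = ‖x‖ₑ ^ (-s) * ‖x‖ₑ ^ (-((σ - s) / 2)) * ‖x - y‖ₑ ^ (-((s + σ) / 2)) := by ring
    _ = ‖x‖ₑ ^ (-((s + σ) / 2)) * ‖x - y‖ₑ ^ (-((s + σ) / 2)) := by
        rw [← ennreal_rpow_neg_add enorm_ne_top hs hgap]
        ring_nf

lemma steinWeissKernel_le_two_rpow_mul_swap {s : ℝ} (hs : 0 ≤ s) (σ : ℝ) {x y : E}
    (h : ‖x - y‖ₑ ≤ ‖x‖ₑ) : steinWeissKernel s σ x y ≤ 2 ^ s * steinWeissKernel s σ y x := by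
  have hy : ‖y‖ₑ ≤ 2 * ‖x‖ₑ := calc
    ‖y‖ₑ = ‖x - (x - y)‖ₑ := by rw [sub_sub_cancel]
    _ ≤ ‖x‖ₑ + ‖x - y‖ₑ := enorm_sub_le
    _ ≤ 2 * ‖x‖ₑ := by rw [two_mul]; gcongr
  calc ‖x‖ₑ ^ (-s) * ‖x - y‖ₑ ^ (-σ)
      = 2 ^ s * (2 * ‖x‖ₑ) ^ (-s) * ‖x - y‖ₑ ^ (-σ) := by
        rw [ENNReal.mul_rpow_of_ne_top ENNReal.ofNat_ne_top enorm_ne_top, ← mul_assoc,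
          ← ENNReal.rpow_add _ _ two_ne_zero ENNReal.ofNat_ne_top, add_neg_cancel,
          ENNReal.rpow_zero, one_mul]
    _ ≤ 2 ^ s * ‖y‖ₑ ^ (-s) * ‖x - y‖ₑ ^ (-σ) := by
        gcongr 2 ^ s * ?_ * _
        exact ennreal_rpow_neg_anti hs hy
    _ = 2 ^ s * steinWeissKernel s σ y x := by rw [steinWeissKernel, enorm_sub_rev, mul_assoc]

lemma steinWeissKernel_le_add_min {s σ : ℝ} (hs : 0 ≤ s) (hsσ : s ≤ σ) (x y : E) :
    steinWeissKernel s σ x y ≤ steinWeissKernel ((s + σ) / 2) ((s + σ) / 2) x y +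
      2 ^ s * min (steinWeissKernel s σ x y) (steinWeissKernel s σ y x) := by
  rcases le_total ‖x‖ₑ ‖x - y‖ₑ with h | h
  · exact le_add_right (steinWeissKernel_le_of_enorm_le hs hsσ h)
  · refine le_add_left ?_
    rw [mul_min, le_min_iff]
    have h2s : (1 : ℝ≥0∞) ≤ 2 ^ s := by
      simpa using ENNReal.rpow_le_rpow_of_exponent_le one_le_two hs
    exact ⟨le_mul_of_one_le_left' h2s, steinWeissKernel_le_two_rpow_mul_swap hs σ h⟩

variable [NormedSpace ℝ E] [FiniteDimensional ℝ E] [MeasurableSpace E] [BorelSpace E]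
  (μ : Measure E) [μ.IsAddHaarMeasure]

lemma exists_setLIntegral_steinWeissKernel_le_mul [Nontrivial E] {s σ : ℝ} (hs : 0 ≤ s)
    (hsN : s < finrank ℝ E) (hσ : 0 ≤ σ) (hσN : σ < finrank ℝ E) :
    ∃ C : ℝ≥0, ∀ A B : Set E, ∫⁻ x in A, ∫⁻ y in B, steinWeissKernel s σ x y ∂μ ∂μ ≤
      C * (μ A ^ (1 - s / finrank ℝ E) * μ B ^ (1 - σ / finrank ℝ E)) := by
  obtain ⟨C₁, h₁⟩ := exists_setLIntegral_enorm_sub_rpow_neg_le μ hs hsN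
  obtain ⟨C₂, h₂⟩ := exists_setLIntegral_enorm_sub_rpow_neg_le μ hσ hσN
  refine ⟨C₁ * C₂, fun A B ↦ ?_⟩
  calc ∫⁻ x in A, ∫⁻ y in B, steinWeissKernel s σ x y ∂μ ∂μ
      ≤ ∫⁻ x in A, ‖x‖ₑ ^ (-s) * (C₂ * μ B ^ (1 - σ / finrank ℝ E)) ∂μ := by
        refine lintegral_mono fun x ↦ ?_
        unfold steinWeissKernel
        rw [lintegral_const_mul _ (by fun_prop)]
        gcongr
        simpa only [enorm_sub_rev] using h₂ B x
    _ = (∫⁻ x in A, ‖x - 0‖ₑ ^ (-s) ∂μ) * (C₂ * μ B ^ (1 - σ / finrank ℝ E)) := by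
        simp only [sub_zero]
        rw [lintegral_mul_const _ (by fun_prop)]
    _ ≤ C₁ * μ A ^ (1 - s / finrank ℝ E) * (C₂ * μ B ^ (1 - σ / finrank ℝ E)) := by
        gcongr
        exact h₁ A 0
    _ = _ := by
        push_cast
        ring

lemma exists_setLIntegral_min_steinWeissKernel_le_mul [Nontrivial E] {s σ : ℝ} (hs : 0 ≤ s)
    (hsN : s < finrank ℝ E) (hσ : 0 ≤ σ) (hσN : σ < finrank ℝ E) :
    ∃ C : ℝ≥0, ∀ A B : Set E,
      ∫⁻ x in A, ∫⁻ y in B, min (steinWeissKernel s σ x y) (steinWeissKernel s σ y x) ∂μ ∂μ ≤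
        C * (μ A ^ (1 - (s + σ) / 2 / finrank ℝ E) * μ B ^ (1 - (s + σ) / 2 / finrank ℝ E)) := by
  obtain ⟨C, hC⟩ := exists_setLIntegral_steinWeissKernel_le_mul μ hs hsN hσ hσN
  refine ⟨C, fun A B ↦ ?_⟩
  set n := (finrank ℝ E : ℝ)
  have hn : 0 < n := hσ.trans_lt hσN
  have hα : 0 ≤ 1 - s / n := sub_nonneg.2 ((div_le_one hn).2 hsN.le)
  have hβ : 0 ≤ 1 - σ / n := sub_nonneg.2 ((div_le_one hn).2 hσN.le)
  have mean (m : ℝ≥0∞) : (m ^ (1 - s / n)) ^ (1 / 2 : ℝ) * (m ^ (1 - σ / n)) ^ (1 / 2 : ℝ) =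
      m ^ (1 - (s + σ) / 2 / n) := by
    rw [← ENNReal.rpow_mul, ← ENNReal.rpow_mul,
      ← ENNReal.rpow_add_of_nonneg _ _ (by positivity) (by positivity)]
    ring_nf
  have left : ∫⁻ x in A, ∫⁻ y in B, min (steinWeissKernel s σ x y) (steinWeissKernel s σ y x) ∂μ ∂μ
      ≤ C * (μ A ^ (1 - s / n) * μ B ^ (1 - σ / n)) :=
    (lintegral_mono fun x ↦ lintegral_mono fun y ↦ min_le_left _ _).trans (hC A B)
  have right : ∫⁻ x in A, ∫⁻ y in B, min (steinWeissKernel s σ x y) (steinWeissKernel s σ y x) ∂μ ∂μ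
      ≤ C * (μ B ^ (1 - s / n) * μ A ^ (1 - σ / n)) := calc
    _ ≤ ∫⁻ x in A, ∫⁻ y in B, steinWeissKernel s σ y x ∂μ ∂μ :=
      lintegral_mono fun x ↦ lintegral_mono fun y ↦ min_le_right _ _
    _ = ∫⁻ y in B, ∫⁻ x in A, steinWeissKernel s σ y x ∂μ ∂μ :=
      lintegral_lintegral_swap
        ((measurable_steinWeissKernel s σ).comp measurable_swap).aemeasurable
    _ ≤ _ := hC B A
  refine (le_rpow_half_mul_rpow_half left right).trans_eq ?_
  have half : (0 : ℝ) ≤ 1 / 2 := by norm_num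
  simp only [ENNReal.mul_rpow_of_nonneg _ _ half, ← mean]
  calc _ = (C ^ (1 / 2 : ℝ) * C ^ (1 / 2 : ℝ) : ℝ≥0∞) *
        (((μ A ^ (1 - s / n)) ^ (1 / 2 : ℝ) * (μ A ^ (1 - σ / n)) ^ (1 / 2 : ℝ)) *
          ((μ B ^ (1 - s / n)) ^ (1 / 2 : ℝ) * (μ B ^ (1 - σ / n)) ^ (1 / 2 : ℝ))) := by ring
    _ = _ := by rw [← ENNReal.rpow_add_of_nonneg _ _ half half, add_halves, ENNReal.rpow_one]

theorem exists_setLIntegral_steinWeissKernel_le [Nontrivial E] {s σ : ℝ} (hs : 0 ≤ s)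
    (hsσ : s ≤ σ) (hσN : σ < finrank ℝ E) :
    ∃ C : ℝ≥0, ∀ A B : Set E, ∫⁻ x in A, ∫⁻ y in B, steinWeissKernel s σ x y ∂μ ∂μ ≤
      C * (μ A ^ (1 - (s + σ) / 2 / finrank ℝ E) * μ B ^ (1 - (s + σ) / 2 / finrank ℝ E)) := by
  obtain ⟨C₁, h₁⟩ := exists_setLIntegral_steinWeissKernel_le_mul μ (s := (s + σ) / 2)
    (σ := (s + σ) / 2) (by linarith) (by linarith) (by linarith) (by linarith)
  obtain ⟨C₂, h₂⟩ := exists_setLIntegral_min_steinWeissKernel_le_mul μ hs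
    (hsσ.trans_lt hσN) (hs.trans hsσ) hσN
  refine ⟨C₁ + 2 ^ s * C₂, fun A B ↦ ?_⟩
  have hK (s σ : ℝ) := measurable_steinWeissKernel (E := E) s σ
  have h2s : (2 : ℝ≥0∞) ^ s ≠ ∞ := ENNReal.rpow_ne_top_of_nonneg hs ENNReal.ofNat_ne_top
  calc ∫⁻ x in A, ∫⁻ y in B, steinWeissKernel s σ x y ∂μ ∂μ
      ≤ ∫⁻ x in A, ∫⁻ y in B, (steinWeissKernel ((s + σ) / 2) ((s + σ) / 2) x y +
          2 ^ s * min (steinWeissKernel s σ x y) (steinWeissKernel s σ y x)) ∂μ ∂μ := by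
        gcongr with x y
        exact steinWeissKernel_le_add_min hs hsσ x y
    _ = (∫⁻ x in A, ∫⁻ y in B, steinWeissKernel ((s + σ) / 2) ((s + σ) / 2) x y ∂μ ∂μ) +
        2 ^ s * ∫⁻ x in A, ∫⁻ y in B,
          min (steinWeissKernel s σ x y) (steinWeissKernel s σ y x) ∂μ ∂μ := by
        simp_rw [lintegral_add_left (hK _ _).of_uncurry_left, lintegral_const_mul' _ _ h2s]
        rw [lintegral_add_left (hK _ _).lintegral_prod_right, lintegral_const_mul' _ _ h2s]
    _ ≤ _ := by
        rw [ENNReal.coe_add, ENNReal.coe_mul, ENNReal.coe_rpow_of_nonneg _ hs, ENNReal.coe_ofNat,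
          add_mul, mul_assoc]
        gcongr
        exacts [h₁ A B, h₂ A B]

end SteinWeiss

lemma measure_rpow_le_eLpNorm {α : Type*} [MeasurableSpace α] (μ : Measure α) {v : α → ℝ}
    {A : Set α} (hA : MeasurableSet A) (hv : ∀ x ∈ A, v x = 1) {q : ℝ≥0} (hq : q ≠ 0) :
    μ A ^ (1 / q : ℝ) ≤ eLpNorm v q μ := by
  have h := eLpNorm_indicator_const (μ := μ) (c := (1 : ℝ)) hA (ENNReal.coe_ne_zero.2 hq)
    ENNReal.coe_ne_top
  rw [enorm_one, one_mul, ENNReal.coe_toReal] at h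
  rw [← h]
  refine eLpNorm_mono fun x ↦ ?_
  by_cases hx : x ∈ A
  · rw [indicator_of_mem hx, hv x hx]
  · rw [indicator_of_notMem hx, norm_zero]
    exact norm_nonneg _

section Truncation

variable {E F : Type*} [NormedAddCommGroup E] [NormedSpace ℝ E] [NormedAddCommGroup F]

/-- The open annulus `{r < ‖z‖ < 2 r}`, on which the derivative of the truncation at height `r`
lives. -/
def openAnnulus (F : Type*) [NormedAddCommGroup F] (r : ℝ≥0) : Set F :=
  {z | r < ‖z‖₊ ∧ ‖z‖₊ < 2 * r}

lemma isOpen_openAnnulus (r : ℝ≥0) : IsOpen (openAnnulus F r) :=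
  isOpen_Ioo.preimage continuous_nnnorm

lemma pairwise_disjoint_openAnnulus_two_zpow :
    Pairwise (Function.onFun Disjoint fun k : ℤ ↦ openAnnulus F (2 ^ k)) := by
  refine (pairwise_disjoint_on _).2 fun k l hkl ↦ disjoint_left.2 fun z hk hl ↦ ?_
  have hpow : (2 : ℝ≥0) * 2 ^ k ≤ 2 ^ l := by
    rw [← zpow_one_add₀ two_ne_zero]
    exact zpow_le_zpow_right₀ one_le_two (by lia)
  exact (hk.2.trans_le hpow).not_gt hl.1

variable [NormedSpace ℝ F]

lemma nnnorm_inv_smul (r : ℝ≥0) (z : F) : ‖(r : ℝ)⁻¹ • z‖₊ = ‖z‖₊ / r := by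
  rw [nnnorm_smul, nnnorm_inv, NNReal.nnnorm_eq, inv_mul_eq_div]

lemma exists_contDiff_truncation (F : Type*) [NormedAddCommGroup F] [NormedSpace ℝ F]
    [FiniteDimensional ℝ F] :
    ∃ (χ : F → ℝ) (M : ℝ≥0), ContDiff ℝ 1 χ ∧ (∀ z, ‖z‖₊ ≤ 1 → χ z = 0) ∧
      (∀ z, 2 ≤ ‖z‖₊ → χ z = 1) ∧ (∀ z, ‖fderiv ℝ χ z‖₊ ≤ M) ∧
      ∀ z ∉ openAnnulus F 1, fderiv ℝ χ z = 0 := by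
  let φ : ContDiffBump (0 : F) := ⟨1, 2, one_pos, one_lt_two⟩
  have hφ_cont : Continuous (fderiv ℝ φ) := (φ.contDiff (n := 1)).continuous_fderiv one_ne_zero
  obtain ⟨M, hM⟩ := hφ_cont.bounded_above_of_compact_support (φ.hasCompactSupport.fderiv ℝ)
  have hfderiv (z : F) : fderiv ℝ (fun z ↦ 1 - φ z) z = -fderiv ℝ φ z := fderiv_const_sub 1
  have hone {z : F} (hz : ‖z‖₊ ≤ 1) : φ z = 1 :=
    φ.one_of_mem_closedBall (mem_closedBall_zero_iff.2 hz)
  have hzero {z : F} (hz : 2 ≤ ‖z‖₊) : φ z = 0 :=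
    φ.zero_of_le_dist ((dist_zero_right z).symm ▸ hz)
  refine ⟨fun z ↦ 1 - φ z, M.toNNReal, contDiff_const.sub φ.contDiff,
    fun z hz ↦ sub_eq_zero.2 (hone hz).symm, fun z hz ↦ sub_eq_self.2 (hzero hz), fun z ↦ ?_,
    fun z hz ↦ ?_⟩
  · rw [hfderiv, nnnorm_neg]
    exact NNReal.le_toNNReal_of_coe_le (hM z)
  · rw [hfderiv, neg_eq_zero]
    by_cases hz1 : ‖z‖₊ ≤ 1
    · exact IsLocalMax.fderiv_eq_zero (.of_forall fun w ↦ (hone hz1).symm ▸ φ.le_one)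
    · have hz2 : 2 ≤ ‖z‖₊ := by simpa using not_and.1 hz (not_le.1 hz1)
      exact IsLocalMin.fderiv_eq_zero (.of_forall fun w ↦ (hzero hz2).symm ▸ φ.nonneg)

lemma exists_contDiff_truncation_at (F : Type*) [NormedAddCommGroup F] [NormedSpace ℝ F]
    [FiniteDimensional ℝ F] :
    ∃ M : ℝ≥0, ∀ r : ℝ≥0, 0 < r → ∃ χ : F → ℝ, ContDiff ℝ 1 χ ∧ χ 0 = 0 ∧
      (∀ z, 2 * r ≤ ‖z‖₊ → χ z = 1) ∧ (∀ z, ‖fderiv ℝ χ z‖₊ ≤ M / r) ∧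
      ∀ z ∉ openAnnulus F r, fderiv ℝ χ z = 0 := by
  obtain ⟨χ, M, hχ, hzero, hone, hM, hsupp⟩ := exists_contDiff_truncation F
  refine ⟨M, fun r hr ↦ ⟨fun z ↦ χ ((r : ℝ)⁻¹ • z), by fun_prop, hzero _ (by simp), fun z hz ↦ ?_,
    fun z ↦ ?_, fun z hz ↦ ?_⟩⟩
  · exact hone _ (by rwa [nnnorm_inv_smul, le_div_iff₀ hr])
  · rw [fderiv_comp_smul]
    refine (nnnorm_inv_smul r (fderiv ℝ χ _)).trans_le ?_
    gcongr
    exact hM _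
  · rw [fderiv_comp_smul, hsupp, smul_zero]
    rwa [openAnnulus, mem_ofPred_eq, nnnorm_inv_smul, lt_div_iff₀ hr, div_lt_iff₀ hr, one_mul,
      mul_one]

lemma eLpNorm_fderiv_comp_le [MeasurableSpace E] [BorelSpace E] (μ : Measure E) {g : F → ℝ}
    (hg : Differentiable ℝ g) {u : E → F} (hu : Differentiable ℝ u) {S : Set F} (hS : IsOpen S)
    {c : ℝ≥0} (hc : ∀ z, ‖fderiv ℝ g z‖₊ ≤ c) (hsupp : ∀ z ∉ S, fderiv ℝ g z = 0) (p : ℝ≥0∞) :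
    eLpNorm (fderiv ℝ (g ∘ u)) p μ ≤ c * eLpNorm (fderiv ℝ u) p (μ.restrict (u ⁻¹' S)) := by
  rw [← eLpNorm_indicator_eq_eLpNorm_restrict (f := fderiv ℝ u)
    (hS.preimage hu.continuous).measurableSet]
  refine eLpNorm_le_nnreal_smul_eLpNorm_of_ae_le_mul (.of_forall fun x ↦ ?_) p
  rw [fderiv_comp x (hg _) (hu x)]
  by_cases hx : u x ∈ S
  · rw [indicator_of_mem (mem_preimage.2 hx)]
    exact (ContinuousLinearMap.opNNNorm_comp_le _ _).trans (by gcongr; exact hc _)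
  · simp [hsupp _ hx]

variable [FiniteDimensional ℝ E] [MeasurableSpace E] [BorelSpace E] (μ : Measure E)

-- Maz'ya truncation: the Sobolev inequality applied to `u` cut off between heights `r` and `2 r`
-- only sees the gradient of `u` between these two heights.
theorem exists_mul_measure_rpow_le_eLpNorm_fderiv [FiniteDimensional ℝ F] [μ.IsAddHaarMeasure]
    {p : ℝ≥0} (hp : 1 ≤ p) (hpn : p < finrank ℝ E) :
    ∃ C : ℝ≥0, ∀ u : E → F, ContDiff ℝ 1 u → HasCompactSupport u → ∀ r : ℝ≥0, 0 < r →
      r * μ {x | 2 * r ≤ ‖u x‖₊} ^ (1 / p - 1 / finrank ℝ E : ℝ) ≤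
        C * eLpNorm (fderiv ℝ u) p (μ.restrict (u ⁻¹' openAnnulus F r)) := by
  obtain ⟨M, hM⟩ := exists_contDiff_truncation_at F
  have hn : 0 < finrank ℝ E := by exact_mod_cast (zero_le (a := p)).trans_lt hpn
  have hgap : (0 : ℝ) < 1 / p - 1 / finrank ℝ E :=
    sub_pos.2 (one_div_lt_one_div_of_lt (by positivity) (by exact_mod_cast hpn))
  obtain ⟨q, hq⟩ : ∃ q : ℝ≥0, (1 / q : ℝ) = 1 / p - 1 / finrank ℝ E :=
    ⟨⟨_, (one_div_pos.2 hgap).le⟩, one_div_one_div _⟩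
  have hq0 : q ≠ 0 := by
    rintro rfl
    rw [← hq, NNReal.coe_zero, div_zero] at hgap
    exact hgap.false
  let S := SNormLESNormFDerivOfEqConst ℝ μ p
  refine ⟨S * M, fun u hu hu_supp r hr ↦ ?_⟩
  obtain ⟨χ, hχ, hzero, hone, hM, hsupp⟩ := hM r hr
  have hlevel : MeasurableSet {x | 2 * r ≤ ‖u x‖₊} :=
    (isClosed_le continuous_const hu.continuous.nnnorm).measurableSet
  calc r * μ {x | 2 * r ≤ ‖u x‖₊} ^ (1 / p - 1 / finrank ℝ E : ℝ)
      ≤ r * eLpNorm (χ ∘ u) q μ := by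
        rw [← hq]
        gcongr
        exact measure_rpow_le_eLpNorm μ hlevel (fun x hx ↦ hone _ hx) hq0
    _ ≤ r * (S * eLpNorm (fderiv ℝ (χ ∘ u)) p μ) := by
        gcongr
        exact eLpNorm_le_eLpNorm_fderiv_of_eq μ (hχ.comp hu) (hu_supp.comp_left hzero) hp hn
          (by simpa using hq)
    _ ≤ r * (S * ((M / r : ℝ≥0) *
          eLpNorm (fderiv ℝ u) p (μ.restrict (u ⁻¹' openAnnulus F r)))) := by
        gcongr
        exact eLpNorm_fderiv_comp_le μ (hχ.differentiable one_ne_zero)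
          (hu.differentiable one_ne_zero) (isOpen_openAnnulus r) hM hsupp p
    _ = (S * (r * (M / r)) : ℝ≥0) *
          eLpNorm (fderiv ℝ u) p (μ.restrict (u ⁻¹' openAnnulus F r)) := by
        push_cast
        ring
    _ = _ := by rw [mul_div_cancel₀ _ hr.ne']

end Truncation

section Summation

variable {α ι : Type*} [MeasurableSpace α] {μ : Measure α}

lemma tsum_rpow_le_rpow_tsum (a : ι → ℝ≥0∞) {r : ℝ} (hr : 1 ≤ r) :
    ∑' i, a i ^ r ≤ (∑' i, a i) ^ r := by
  have split (x : ℝ≥0∞) : x ^ r = x * x ^ (r - 1) := by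
    simpa using ENNReal.rpow_add_of_nonneg (x := x) 1 (r - 1) zero_le_one (sub_nonneg.2 hr)
  calc ∑' i, a i ^ r = ∑' i, a i * a i ^ (r - 1) := by simp only [split]
    _ ≤ ∑' i, a i * (∑' j, a j) ^ (r - 1) := by
        gcongr with i
        exact ENNReal.le_tsum i
    _ = (∑' i, a i) ^ r := by rw [ENNReal.tsum_mul_right, ← split]

lemma tsum_eLpNorm_restrict_rpow_le {G : Type*} [NormedAddCommGroup G] [Countable ι] {A : ι → Set α}
    (hA : ∀ i, MeasurableSet (A i)) (hdisj : Pairwise (Function.onFun Disjoint A)) (f : α → G)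
    {p : ℝ≥0} (hp : p ≠ 0) {q : ℝ} (hpq : p ≤ q) :
    ∑' i, eLpNorm f p (μ.restrict (A i)) ^ q ≤ eLpNorm f p μ ^ q := by
  have hp0 : (0 : ℝ) < p := by positivity
  have hq (ν : Measure α) : eLpNorm f p ν ^ q = (∫⁻ x, ‖f x‖ₑ ^ (p : ℝ) ∂ν) ^ (q / p) := by
    rw [eLpNorm_nnreal_eq_lintegral hp, ← ENNReal.rpow_mul, one_div_mul_eq_div]
  have hq0 : 0 ≤ q / p := div_nonneg (hp0.le.trans hpq) hp0.le
  calc ∑' i, eLpNorm f p (μ.restrict (A i)) ^ q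
      = ∑' i, (∫⁻ x in A i, ‖f x‖ₑ ^ (p : ℝ) ∂μ) ^ (q / p) := by simp only [hq]
    _ ≤ (∑' i, ∫⁻ x in A i, ‖f x‖ₑ ^ (p : ℝ) ∂μ) ^ (q / p) :=
        tsum_rpow_le_rpow_tsum _ ((one_le_div hp0).2 hpq)
    _ = (∫⁻ x in ⋃ i, A i, ‖f x‖ₑ ^ (p : ℝ) ∂μ) ^ (q / p) := by rw [lintegral_iUnion hA hdisj]
    _ ≤ (∫⁻ x, ‖f x‖ₑ ^ (p : ℝ) ∂μ) ^ (q / p) := by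
        gcongr ?_ ^ _
        exact setLIntegral_le_lintegral _ _
    _ = eLpNorm f p μ ^ q := (hq μ).symm

lemma lintegral_tsum_indicator_mul [Countable ι] {A : ι → Set α} (hA : ∀ i, MeasurableSet (A i))
    (c : ι → ℝ≥0∞) {g : α → ℝ≥0∞} (hg : Measurable g) :
    ∫⁻ x, (∑' i, (A i).indicator (fun _ ↦ c i) x) * g x ∂μ = ∑' i, c i * ∫⁻ x in A i, g x ∂μ := by
  simp_rw [← ENNReal.tsum_mul_right, ← indicator_mul_left]
  rw [lintegral_tsum fun i ↦ ((hg.const_mul _).indicator (hA i)).aemeasurable]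
  refine tsum_congr fun i ↦ ?_
  rw [lintegral_indicator (hA i), lintegral_const_mul _ hg]

lemma lintegral_lintegral_tsum_indicator_le [Countable ι] [SFinite μ] {A : ι → Set α}
    (hA : ∀ i, MeasurableSet (A i)) (c φ : ι → ℝ≥0∞) {K : α → α → ℝ≥0∞}
    (hK : Measurable (Function.uncurry K)) {C : ℝ≥0∞}
    (hφ : ∀ i j, ∫⁻ x in A i, ∫⁻ y in A j, K x y ∂μ ∂μ ≤ C * (φ i * φ j)) :
    ∫⁻ x, ∫⁻ y, (∑' i, (A i).indicator (fun _ ↦ c i) x) *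
      ((∑' j, (A j).indicator (fun _ ↦ c j) y) * K x y) ∂μ ∂μ ≤ C * (∑' i, c i * φ i) ^ 2 := by
  have hf : Measurable fun y ↦ ∑' j, (A j).indicator (fun _ ↦ c j) y :=
    .tsum fun j ↦ measurable_const.indicator (hA j)
  have hinner (j : ι) : Measurable fun x ↦ ∫⁻ y in A j, K x y ∂μ := hK.lintegral_prod_right
  calc ∫⁻ x, ∫⁻ y, (∑' i, (A i).indicator (fun _ ↦ c i) x) *
        ((∑' j, (A j).indicator (fun _ ↦ c j) y) * K x y) ∂μ ∂μ
      = ∫⁻ x, (∑' i, (A i).indicator (fun _ ↦ c i) x) *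
          ∑' j, c j * ∫⁻ y in A j, K x y ∂μ ∂μ := by
        refine lintegral_congr fun x ↦ ?_
        rw [lintegral_const_mul _ (by exact hf.mul hK.of_uncurry_left),
          lintegral_tsum_indicator_mul hA c hK.of_uncurry_left]
    _ = ∑' i, c i * ∑' j, c j * ∫⁻ x in A i, ∫⁻ y in A j, K x y ∂μ ∂μ := by
        rw [lintegral_tsum_indicator_mul hA c (.tsum fun j ↦ (hinner j).const_mul _)]
        congr! 3 with i
        rw [lintegral_tsum fun j ↦ ((hinner j).const_mul _).aemeasurable]
        exact tsum_congr fun j ↦ lintegral_const_mul _ (hinner j)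
    _ ≤ ∑' i, c i * ∑' j, c j * (C * (φ i * φ j)) := by
        gcongr
        exact hφ _ _
    _ = ∑' i, ∑' j, C * (c i * φ i * (c j * φ j)) := by
        simp_rw [← ENNReal.tsum_mul_left]
        congr! 4
        ring
    _ = C * (∑' i, c i * φ i) ^ 2 := by
        simp_rw [ENNReal.tsum_mul_left, ENNReal.tsum_mul_right, sq]

lemma enorm_rpow_le_tsum_indicator {F : Type*} [NormedAddCommGroup F] {q : ℝ} (hq : 0 < q) (z : F) :
    ‖z‖ₑ ^ q ≤ ∑' k : ℤ, {z : F | 2 * 2 ^ k ≤ ‖z‖₊}.indicator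
      (fun _ ↦ (4 * (2 ^ k : ℝ≥0) : ℝ≥0∞) ^ q) z := by
  rcases eq_or_ne z 0 with rfl | hz
  · simp [hq]
  obtain ⟨k, hk, hk'⟩ := exists_mem_Ico_zpow (half_pos (nnnorm_pos.2 hz)) one_lt_two
  rw [le_div_iff₀' two_pos] at hk
  rw [div_lt_iff₀ two_pos, zpow_add_one₀ two_ne_zero] at hk'
  refine le_trans ?_ (ENNReal.le_tsum k)
  rw [indicator_of_mem (mem_ofPred_eq ▸ hk)]
  gcongr
  rw [enorm_eq_nnnorm]
  norm_cast
  linarith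

end Summation

section Main

variable {E F : Type*} [NormedAddCommGroup E] [NormedSpace ℝ E] [FiniteDimensional ℝ E]
  [MeasurableSpace E] [BorelSpace E] (μ : Measure E) [μ.IsAddHaarMeasure]
  [NormedAddCommGroup F] [NormedSpace ℝ F] [FiniteDimensional ℝ F]

lemma exists_tsum_mul_measure_rpow_le_eLpNorm_fderiv {p : ℝ≥0} (hp : 1 ≤ p)
    (hpn : p < finrank ℝ E) {q : ℝ} (hpq : p ≤ q) :
    ∃ C : ℝ≥0, ∀ u : E → F, ContDiff ℝ 1 u → HasCompactSupport u →
      ∑' k : ℤ, (4 * (2 ^ k : ℝ≥0) : ℝ≥0∞) ^ q *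
          μ {x | 2 * 2 ^ k ≤ ‖u x‖₊} ^ (q * (1 / p - 1 / finrank ℝ E)) ≤
        (C * eLpNorm (fderiv ℝ u) p μ) ^ q := by
  obtain ⟨C, hC⟩ := exists_mul_measure_rpow_le_eLpNorm_fderiv (F := F) μ hp hpn
  have hp0 : 0 < p := one_pos.trans_le hp
  have hq : 0 ≤ q := p.coe_nonneg.trans hpq
  refine ⟨4 * C, fun u hu hu_supp ↦ ?_⟩
  let shell (k : ℤ) : Set E := u ⁻¹' openAnnulus F (2 ^ k)
  have hshell (k : ℤ) : MeasurableSet (shell k) :=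
    ((isOpen_openAnnulus _).preimage hu.continuous).measurableSet
  have hdisj : Pairwise (Function.onFun Disjoint shell) := fun k l hkl ↦
    (pairwise_disjoint_openAnnulus_two_zpow hkl).preimage u
  calc ∑' k : ℤ, (4 * (2 ^ k : ℝ≥0) : ℝ≥0∞) ^ q *
        μ {x | 2 * 2 ^ k ≤ ‖u x‖₊} ^ (q * (1 / p - 1 / finrank ℝ E))
      = ∑' k : ℤ, 4 ^ q * ((2 ^ k : ℝ≥0) *
          μ {x | 2 * 2 ^ k ≤ ‖u x‖₊} ^ (1 / p - 1 / finrank ℝ E : ℝ)) ^ q := by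
        simp only [ENNReal.mul_rpow_of_nonneg _ _ hq, mul_comm q, ENNReal.rpow_mul, mul_assoc]
    _ ≤ ∑' k : ℤ, 4 ^ q * (C * eLpNorm (fderiv ℝ u) p (μ.restrict (shell k))) ^ q := by
        gcongr ∑' k : ℤ, 4 ^ q * ?_ ^ q with k
        exact hC u hu hu_supp _ (by positivity)
    _ = (4 * C) ^ q * ∑' k : ℤ, eLpNorm (fderiv ℝ u) p (μ.restrict (shell k)) ^ q := by
        simp only [ENNReal.mul_rpow_of_nonneg _ _ hq, ENNReal.tsum_mul_left, mul_assoc]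
    _ ≤ (4 * C) ^ q * eLpNorm (fderiv ℝ u) p μ ^ q := by
        gcongr
        exact tsum_eLpNorm_restrict_rpow_le hshell hdisj _ hp0.ne' hpq
    _ = _ := by
        rw [← ENNReal.mul_rpow_of_nonneg _ _ hq]
        push_cast
        rfl

theorem exists_lintegral_lintegral_rpow_le_eLpNorm_fderiv {p : ℝ≥0} (hp : 1 ≤ p)
    (hpn : p < finrank ℝ E) {q : ℝ} (hpq : p ≤ q) {K : E → E → ℝ≥0∞}
    (hK : Measurable (Function.uncurry K)) {D : ℝ≥0}
    (hD : ∀ A B : Set E, ∫⁻ x in A, ∫⁻ y in B, K x y ∂μ ∂μ ≤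
      D * (μ A ^ (q * (1 / p - 1 / finrank ℝ E)) * μ B ^ (q * (1 / p - 1 / finrank ℝ E)))) :
    ∃ C : ℝ≥0, ∀ u : E → F, ContDiff ℝ 1 u → HasCompactSupport u →
      (∫⁻ x, ∫⁻ y, ‖u x‖ₑ ^ q * (‖u y‖ₑ ^ q * K x y) ∂μ ∂μ) ^ (1 / (2 * q)) ≤
        C * eLpNorm (fderiv ℝ u) p μ := by
  obtain ⟨C, hC⟩ := exists_tsum_mul_measure_rpow_le_eLpNorm_fderiv (F := F) μ hp hpn hpq
  have hq : 0 < q := one_pos.trans_le ((NNReal.one_le_coe.2 hp).trans hpq)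
  have hq' : 0 ≤ 1 / (2 * q) := by positivity
  refine ⟨D ^ (1 / (2 * q)) * C, fun u hu hu_supp ↦ ?_⟩
  let A (k : ℤ) : Set E := {x | 2 * 2 ^ k ≤ ‖u x‖₊}
  let c (k : ℤ) : ℝ≥0∞ := (4 * (2 ^ k : ℝ≥0)) ^ q
  have hA (k : ℤ) : MeasurableSet (A k) :=
    (isClosed_le continuous_const hu.continuous.nnnorm).measurableSet
  have hint : ∫⁻ x, ∫⁻ y, ‖u x‖ₑ ^ q * (‖u y‖ₑ ^ q * K x y) ∂μ ∂μ ≤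
      D * ((C * eLpNorm (fderiv ℝ u) p μ) ^ q) ^ 2 := calc
    _ ≤ ∫⁻ x, ∫⁻ y, (∑' k, (A k).indicator (fun _ ↦ c k) x) *
          ((∑' k, (A k).indicator (fun _ ↦ c k) y) * K x y) ∂μ ∂μ := by
        gcongr with x y
        exacts [enorm_rpow_le_tsum_indicator hq (u x), enorm_rpow_le_tsum_indicator hq (u y)]
    _ ≤ D * (∑' k, c k * μ (A k) ^ (q * (1 / p - 1 / finrank ℝ E))) ^ 2 :=
        lintegral_lintegral_tsum_indicator_le hA _ _ hK fun k l ↦ hD _ _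
    _ ≤ _ := by
        gcongr
        exact hC u hu hu_supp
  calc _ ≤ (D * ((C * eLpNorm (fderiv ℝ u) p μ) ^ q) ^ 2 : ℝ≥0∞) ^ (1 / (2 * q)) := by gcongr
    _ = D ^ (1 / (2 * q)) * (C * eLpNorm (fderiv ℝ u) p μ) := by
        have hexp : q * 2 * (1 / (2 * q)) = 1 := by field_simp
        rw [ENNReal.mul_rpow_of_nonneg _ _ hq', ← ENNReal.rpow_two, ← ENNReal.rpow_mul _ q,
          ← ENNReal.rpow_mul _ (q * 2), hexp, ENNReal.rpow_one]
    _ = _ := by rw [ENNReal.coe_mul, ENNReal.coe_rpow_of_nonneg _ hq', mul_assoc]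

end Main

section Critical

lemma le_pcrit {N : ℕ} {p s σ : ℝ} (hp : 0 ≤ p) (hpN : p < N) (hss : σ + s ≤ 2 * p) :
    p ≤ pcrit N p s σ := by
  rw [pcrit, le_div_iff₀ (by linarith)]
  linarith [mul_le_mul_of_nonneg_left hss hp]

lemma pcrit_mul_sobolev_gap {N : ℕ} {p : ℝ} (hp : 0 < p) (hpN : p < N) (s σ : ℝ) :
    pcrit N p s σ * (1 / p - 1 / N) = 1 - (s + σ) / 2 / N := by
  have hN : (N : ℝ) ≠ 0 := (hp.trans hpN).ne'
  have hgap : (N : ℝ) - p ≠ 0 := (sub_pos.2 hpN).ne'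
  rw [pcrit]
  field_simp
  ring

lemma ofReal_norm_rpow_s16 {G : Type*} [SeminormedAddGroup G] (z : G) {t : ℝ} (ht : 0 ≤ t) :
    ENNReal.ofReal (‖z‖ ^ t) = ‖z‖ₑ ^ t := by
  rw [← ofReal_norm, ENNReal.ofReal_rpow_of_nonneg (norm_nonneg z) ht]

-- Only an inequality, because the real quotient is `0` where its denominator vanishes.
lemma ofReal_div_le_mul_steinWeissKernel {E F : Type*} [NormedAddCommGroup E]
    [SeminormedAddGroup F] {q s σ : ℝ} (hq : 0 ≤ q) (hs : 0 ≤ s) (hσ : 0 ≤ σ) (a b : F) (x y : E) :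
    ENNReal.ofReal (‖a‖ ^ q * ‖b‖ ^ q / (‖x‖ ^ s * ‖x - y‖ ^ σ)) ≤
      ‖a‖ₑ ^ q * (‖b‖ₑ ^ q * steinWeissKernel s σ x y) := by
  refine (ENNReal.ofReal_div_le (by positivity)).trans_eq ?_
  rw [ENNReal.ofReal_mul (by positivity), ENNReal.ofReal_mul (by positivity),
    ofReal_norm_rpow_s16 a hq, ofReal_norm_rpow_s16 b hq, ofReal_norm_rpow_s16 x hs, ofReal_norm_rpow_s16 _ hσ,
    steinWeissKernel, ENNReal.rpow_neg, ENNReal.rpow_neg, div_eq_mul_inv, ENNReal.mul_inv,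
    mul_assoc]
  exacts [.inr (ENNReal.rpow_ne_top_of_nonneg hσ enorm_ne_top),
    .inl (ENNReal.rpow_ne_top_of_nonneg hs enorm_ne_top)]

end Critical

theorem stmt_16_general {E F : Type*} [NormedAddCommGroup E] [NormedSpace ℝ E]
    [FiniteDimensional ℝ E] [MeasurableSpace E] [BorelSpace E] [NormedAddCommGroup F]
    [NormedSpace ℝ F] [FiniteDimensional ℝ F] (μ : Measure E) [μ.IsAddHaarMeasure] {p s σ : ℝ}
    (hp : 1 ≤ p) (hpN : p < finrank ℝ E) (hs : 0 ≤ s) (hsσ : s ≤ σ) (hσN : σ < finrank ℝ E)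
    (hss : σ + s ≤ 2 * p) :
    ∃ C : ℝ, 0 < C ∧ ∀ u : E → F, ContDiff ℝ 1 u → HasCompactSupport u →
      (∫⁻ x, ∫⁻ y, ENNReal.ofReal (‖u x‖ ^ pcrit (finrank ℝ E) p s σ *
            ‖u y‖ ^ pcrit (finrank ℝ E) p s σ / (‖x‖ ^ s * ‖x - y‖ ^ σ)) ∂μ ∂μ) ^
          (1 / (2 * pcrit (finrank ℝ E) p s σ)) ≤
        ENNReal.ofReal (C * (∫ x, ‖fderiv ℝ u x‖ ^ p ∂μ) ^ (1 / p)) := by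
  have hp0 : 0 < p := one_pos.trans_le hp
  have : Nontrivial E := finrank_pos_iff.1 (by exact_mod_cast hp0.trans hpN)
  set q := pcrit (finrank ℝ E) p s σ with hq_def
  have hpq : p ≤ q := le_pcrit hp0.le hpN hss
  have hq : 0 ≤ q := hp0.le.trans hpq
  lift p to ℝ≥0 using hp0.le
  obtain ⟨D, hD⟩ := exists_setLIntegral_steinWeissKernel_le μ hs hsσ hσN
  rw [← pcrit_mul_sobolev_gap hp0 hpN, ← hq_def] at hD
  obtain ⟨C, hC⟩ := exists_lintegral_lintegral_rpow_le_eLpNorm_fderiv (F := F) μ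
    (p := p) (by exact_mod_cast hp) (by exact_mod_cast hpN) hpq (measurable_steinWeissKernel s σ) hD
  refine ⟨C + 1, by positivity, fun u hu hu_supp ↦ ?_⟩
  have hfderiv : MemLp (fderiv ℝ u) p μ :=
    (hu.continuous_fderiv one_ne_zero).memLp_of_hasCompactSupport (hu_supp.fderiv ℝ)
  calc _ ≤ (∫⁻ x, ∫⁻ y, ‖u x‖ₑ ^ q * (‖u y‖ₑ ^ q * steinWeissKernel s σ x y) ∂μ ∂μ) ^
        (1 / (2 * q)) := by
        refine ENNReal.rpow_le_rpow (lintegral_mono fun x ↦ lintegral_mono fun y ↦ ?_)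
          (by positivity)
        exact ofReal_div_le_mul_steinWeissKernel hq hs (hs.trans hsσ) (u x) (u y) x y
    _ ≤ C * eLpNorm (fderiv ℝ u) p μ := hC u hu hu_supp
    _ ≤ (C + 1 : ℝ≥0) * eLpNorm (fderiv ℝ u) p μ := by gcongr; exact le_self_add
    _ = ENNReal.ofReal ((C + 1) * (∫ x, ‖fderiv ℝ u x‖ ^ (p : ℝ) ∂μ) ^ (1 / p : ℝ)) := by
        rw [hfderiv.eLpNorm_eq_integral_rpow_norm (by simpa using hp0.ne') ENNReal.coe_ne_top,
          ENNReal.ofReal_mul (by positivity), ENNReal.coe_toReal, one_div, ← NNReal.coe_one,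
          ← NNReal.coe_add, ENNReal.ofReal_coe_nnreal]

/-- Inequality (1.16): the doubly weighted Hardy–Littlewood–Sobolev/Sobolev embedding
`(∬ |u(x)|^{p_{s,σ}}|u(y)|^{p_{s,σ}} / (|x|^s |x-y|^σ))^{1/(2p_{s,σ})}
  ≤ C (∫ |∇u|^p)^{1/p}` for smooth compactly supported `u`. -/
theorem stmt_16 (N : ℕ) (hN : 2 ≤ N) (p s σ : ℝ) (hp1 : 1 < p) (hpN : p < (N : ℝ))
    (hs0 : 0 ≤ s) (hsp : s < p) (hsσ : s < σ) (hσN : σ < (N : ℝ))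
    (hss0 : 0 < σ + s) (hss : σ + s ≤ 2 * p) :
    ∃ C : ℝ, 0 < C ∧ ∀ u : EuclideanSpace ℝ (Fin N) → ℝ,
      ContDiff ℝ (⊤ : ℕ∞) u → HasCompactSupport u →
      (∫⁻ x, ∫⁻ y, ENNReal.ofReal
            (|u x| ^ pcrit N p s σ * |u y| ^ pcrit N p s σ / (‖x‖ ^ s * ‖x - y‖ ^ σ))) ^
          (1 / (2 * pcrit N p s σ)) ≤
        ENNReal.ofReal (C * (∫ x, ‖fderiv ℝ u x‖ ^ p) ^ (1 / p)) := by
  obtain ⟨C, hC, h⟩ := stmt_16_general (E := EuclideanSpace ℝ (Fin N)) (F := ℝ) volume hp1.le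
    (by simpa) hs0 hsσ.le (by simpa) hss
  exact ⟨C, hC, fun u hu hu_supp ↦ by simpa using h u (hu.of_le (by exact_mod_cast le_top)) hu_supp⟩
end
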